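/- arXiv:2507.20274 — 3 statements merged into one kernel-verified Lean document; each statement's English description precedes it below -/
import Mathlib

section
/- Flow parameter identities (Lemma 2.9): Fix κ ∈ (0,1). Let z ∈ ℂ with 0 < Im z ≤ 1 and |Re z| ≤ 2 − κ, set m = m(z), t₀ := |m|², and E := −2·Re(m)/|m|. Then: (i) t₀ = Im m / (Im m + Im z); (ii) |E| ≤ 2 and √t₀ · m(E) = m(z); (iii) E + (1 − t₀)·m(E) = √t₀ · z, i.e. z_{t₀}(E) = √t₀·z for the flow z_t(E) := E + (1−t)·m(E); and (iv) there exists a constant c_κ > 0, depending only on κ, such that t₀ ≥ c_κ and c_κ ≤ Im m(E) ≤ 1. -/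
/-- The Stieltjes transform of the semicircle law at a real energy `E` with `|E| ≤ 2`:
`m(E) := (−E + i√(4−E²))/2`, so that `|m(E)| = 1`. -/
noncomputable def mSC (E : ℝ) : ℂ :=
  (-(E : ℂ) + Complex.I * ((Real.sqrt (4 - E ^ 2) : ℝ) : ℂ)) / 2

/-!
Let `u = m / |m|`. Since `|u| = 1` and `u + conj u = -E`, the number `u` is the root `m(E)` of
`w ^ 2 + E w + 1` in the upper half plane, which is `√t₀ m(E) = m`. Multiplying the equation
`m (m + z) = -1` by `conj m` gives `t₀ (m + z) = -conj m`; its imaginary part is the formula for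
`t₀`, and dividing it by `√t₀` gives the flow identity. Its real part gives
`(1 + t₀) E = 2 √t₀ Re z`, so `|E| ≤ |Re z|` by AM-GM, which keeps `E` away from the spectral
edges `±2`. Finally `|m| |m + z| = 1` keeps `|m|` away from `0` as long as `z` is bounded.
-/

open scoped ComplexConjugate

theorem mSC_re (E : ℝ) : (mSC E).re = -E / 2 := by
  simp [mSC]

theorem mSC_im (E : ℝ) : (mSC E).im = √(4 - E ^ 2) / 2 := by
  simp [mSC]

theorem mSC_im_le_one (E : ℝ) : (mSC E).im ≤ 1 := by
  have hsqrt : √(4 - E ^ 2) ≤ 2 := Real.sqrt_le_iff.mpr ⟨by norm_num, by nlinarith [sq_nonneg E]⟩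
  rw [mSC_im]
  linarith

theorem one_sub_half_abs_le_mSC_im (E : ℝ) : 1 - |E| / 2 ≤ (mSC E).im := by
  have hsqrt : 2 - |E| ≤ √(4 - E ^ 2) := by
    rcases le_total |E| 2 with hE | hE
    · apply Real.le_sqrt_of_sq_le
      nlinarith [sq_abs E, mul_nonneg (abs_nonneg E) (sub_nonneg.mpr hE)]
    · exact (sub_nonpos.mpr hE).trans (Real.sqrt_nonneg _)
  rw [mSC_im]
  linarith

theorem mSC_neg_two_mul_re {u : ℂ} (hu : ‖u‖ = 1) (hu_im : 0 ≤ u.im) : mSC (-2 * u.re) = u := by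
  have hsq : 4 - (-2 * u.re) ^ 2 = (2 * u.im) ^ 2 := by
    have hnorm : u.re * u.re + u.im * u.im = 1 := by
      rw [← Complex.normSq_apply, ← Complex.sq_norm, hu, one_pow]
    linear_combination -4 * hnorm
  apply Complex.ext
  · rw [mSC_re]
    ring
  · rw [mSC_im, hsq, Real.sqrt_sq (by positivity)]
    ring

/-- The flow `z_t(E) = E + (1 - t) m(E)`. -/
noncomputable def semicircleFlow (t E : ℝ) : ℂ :=
  E + (1 - t) * mSC E

/-- The energy `E = -2 Re m / |m|` for which `m(E)` is the direction of `m`, when `m` lies in the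
upper half plane. -/
noncomputable def flowEnergy (m : ℂ) : ℝ :=
  -2 * m.re / ‖m‖

theorem flowEnergy_eq_neg_two_mul_re_div_norm (m : ℂ) :
    flowEnergy m = -2 * (m / (‖m‖ : ℂ)).re := by
  rw [flowEnergy, Complex.div_ofReal_re, mul_div_assoc]

theorem abs_flowEnergy_le_two (m : ℂ) : |flowEnergy m| ≤ 2 := by
  rw [flowEnergy, mul_div_assoc, abs_mul, abs_neg, abs_two]
  linarith [Complex.abs_re_div_norm_le_one m]

theorem norm_mul_mSC_flowEnergy {m : ℂ} (hm : 0 ≤ m.im) :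
    (‖m‖ : ℂ) * mSC (flowEnergy m) = m := by
  rcases eq_or_ne m 0 with rfl | hm₀
  · simp
  have hnorm : ‖m‖ ≠ 0 := norm_ne_zero_iff.mpr hm₀
  have hdir : ‖m / (‖m‖ : ℂ)‖ = 1 := by simp [hnorm]
  have hdir_im : 0 ≤ (m / (‖m‖ : ℂ)).im := by
    rw [Complex.div_ofReal_im]
    positivity
  rw [flowEnergy_eq_neg_two_mul_re_div_norm, mSC_neg_two_mul_re hdir hdir_im,
    mul_div_cancel₀ _ (Complex.ofReal_ne_zero.mpr hnorm)]

/-- The self-consistent equation `m ^ 2 + z m + 1 = 0` of the semicircle law. For `Im z > 0` its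
solution `m` in the upper half plane is `m(z)`; the half-plane conditions are kept separate. -/
def IsSemicircleRoot (z m : ℂ) : Prop :=
  m ^ 2 + z * m + 1 = 0

namespace IsSemicircleRoot

variable {z m : ℂ}

theorem mul_add_eq_neg_one (h : IsSemicircleRoot z m) : m * (m + z) = -1 := by
  rw [IsSemicircleRoot] at h
  linear_combination h

theorem ne_zero (h : IsSemicircleRoot z m) : m ≠ 0 := by
  rintro rfl
  simpa using h.mul_add_eq_neg_one

theorem norm_sq_mul_add (h : IsSemicircleRoot z m) : ((‖m‖ ^ 2 : ℝ) : ℂ) * (m + z) = -conj m := by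
  calc ((‖m‖ ^ 2 : ℝ) : ℂ) * (m + z) = conj m * (m * (m + z)) := by
        rw [Complex.ofReal_pow, ← Complex.conj_mul', mul_assoc]
    _ = -conj m := by rw [h.mul_add_eq_neg_one, mul_neg_one]

theorem norm_sq_mul_add_re (h : IsSemicircleRoot z m) : ‖m‖ ^ 2 * (m.re + z.re) = -m.re := by
  simpa only [Complex.re_ofReal_mul, Complex.add_re, Complex.neg_re, Complex.conj_re]
    using congrArg Complex.re h.norm_sq_mul_add

theorem norm_sq_mul_add_im (h : IsSemicircleRoot z m) : ‖m‖ ^ 2 * (m.im + z.im) = m.im := by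
  simpa only [Complex.im_ofReal_mul, Complex.add_im, Complex.neg_im, Complex.conj_im, neg_neg]
    using congrArg Complex.im h.norm_sq_mul_add

theorem norm_sq_eq_im_div (h : IsSemicircleRoot z m) (hm : m.im ≠ 0) :
    ‖m‖ ^ 2 = m.im / (m.im + z.im) := by
  have hsum : m.im + z.im ≠ 0 := by
    intro hzero
    exact hm (by rw [← h.norm_sq_mul_add_im, hzero, mul_zero])
  exact eq_div_of_mul_eq hsum h.norm_sq_mul_add_im

theorem semicircleFlow_norm_sq (h : IsSemicircleRoot z m) (hm : 0 ≤ m.im) :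
    semicircleFlow (‖m‖ ^ 2) (flowEnergy m) = ‖m‖ * z := by
  have hnorm : (‖m‖ : ℂ) ≠ 0 := Complex.ofReal_ne_zero.mpr (norm_ne_zero_iff.mpr h.ne_zero)
  have hm_eq : (‖m‖ : ℂ) * mSC (flowEnergy m) = m := norm_mul_mSC_flowEnergy hm
  have henergy : (‖m‖ : ℂ) * flowEnergy m = -(m + conj m) := by
    rw [flowEnergy, Complex.add_conj]
    push_cast
    field_simp
  have hadd := h.norm_sq_mul_add
  apply mul_left_cancel₀ hnorm
  rw [semicircleFlow]
  push_cast at hadd ⊢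
  linear_combination henergy + (1 - (‖m‖ : ℂ) ^ 2) * hm_eq - hadd

theorem one_add_norm_sq_mul_flowEnergy (h : IsSemicircleRoot z m) :
    (1 + ‖m‖ ^ 2) * flowEnergy m = 2 * ‖m‖ * z.re := by
  have hnorm : ‖m‖ ≠ 0 := norm_ne_zero_iff.mpr h.ne_zero
  rw [flowEnergy]
  field_simp
  linear_combination -h.norm_sq_mul_add_re

theorem abs_flowEnergy_le_abs_re (h : IsSemicircleRoot z m) : |flowEnergy m| ≤ |z.re| := by
  have hpos : 0 < 1 + ‖m‖ ^ 2 := by positivity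
  refine le_of_mul_le_mul_left ?_ hpos
  calc (1 + ‖m‖ ^ 2) * |flowEnergy m| = |(1 + ‖m‖ ^ 2) * flowEnergy m| := by
        rw [abs_mul, abs_of_pos hpos]
    _ = 2 * ‖m‖ * |z.re| := by
        rw [h.one_add_norm_sq_mul_flowEnergy, abs_mul, abs_of_nonneg (by positivity)]
    _ ≤ (1 + ‖m‖ ^ 2) * |z.re| := by
        gcongr
        linarith [two_mul_le_add_sq 1 ‖m‖]

theorem inv_one_add_norm_le_norm (h : IsSemicircleRoot z m) : (1 + ‖z‖)⁻¹ ≤ ‖m‖ := by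
  have hpos : 0 < 1 + ‖z‖ := by positivity
  rcases le_total ‖m‖ 1 with hm | hm
  · rw [inv_le_iff_one_le_mul₀ hpos]
    calc 1 = ‖m‖ * ‖m + z‖ := by rw [← norm_mul, h.mul_add_eq_neg_one, norm_neg, norm_one]
      _ ≤ ‖m‖ * (‖m‖ + ‖z‖) := by gcongr; exact norm_add_le m z
      _ ≤ ‖m‖ * (1 + ‖z‖) := by gcongr
  · exact (inv_le_one_of_one_le₀ (le_add_of_nonneg_right (norm_nonneg z))).trans hm

end IsSemicircleRoot

/-- **Flow parameter identities (Lemma 2.9).**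
Fix `κ ∈ (0,1)`.  For `z` in the upper half plane with `Im z ≤ 1` and `|Re z| ≤ 2 − κ`,
let `m = m(z)` be the unique solution of `m² + zm + 1 = 0` with `Im m > 0`, and set
`t₀ := |m|²` and `E := −2 Re m / |m|`.  Then `t₀ = Im m/(Im m + Im z)`, `|E| ≤ 2`,
`√t₀ · m(E) = m(z)`, `z_{t₀}(E) = √t₀ · z`, and there is a constant `c_κ > 0`
depending only on `κ` with `t₀ ≥ c_κ` and `c_κ ≤ Im m(E) ≤ 1`. -/
theorem flow_parameter_identities (κ : ℝ) (hκ0 : 0 < κ) (hκ1 : κ < 1) :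
    ∃ c : ℝ, 0 < c ∧
      ∀ z m : ℂ, 0 < z.im → z.im ≤ 1 → |z.re| ≤ 2 - κ →
        m ^ 2 + z * m + 1 = 0 → 0 < m.im →
        ∀ t₀ E : ℝ, t₀ = ‖m‖ ^ 2 → E = -2 * m.re / ‖m‖ →
          t₀ = m.im / (m.im + z.im) ∧
          |E| ≤ 2 ∧
          ((Real.sqrt t₀ : ℝ) : ℂ) * mSC E = m ∧
          (E : ℂ) + (1 - (t₀ : ℂ)) * mSC E = ((Real.sqrt t₀ : ℝ) : ℂ) * z ∧
          c ≤ t₀ ∧ c ≤ (mSC E).im ∧ (mSC E).im ≤ 1 := by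
  refine ⟨κ / 16, by positivity, ?_⟩
  rintro z m hz_pos hz_im hz_re hroot hm t₀ E rfl hE
  obtain rfl : E = flowEnergy m := hE
  have h : IsSemicircleRoot z m := hroot
  have hE_le : |flowEnergy m| ≤ 2 - κ := h.abs_flowEnergy_le_abs_re.trans hz_re
  have hz : ‖z‖ ≤ 3 := by
    linarith [Complex.norm_le_abs_re_add_abs_im z, abs_of_pos hz_pos]
  have hm_norm : 1 / 4 ≤ ‖m‖ :=
    calc (1 / 4 : ℝ) = (1 + 3)⁻¹ := by norm_num
      _ ≤ (1 + ‖z‖)⁻¹ := by gcongr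
      _ ≤ ‖m‖ := h.inv_one_add_norm_le_norm
  rw [Real.sqrt_sq (norm_nonneg m)]
  refine ⟨h.norm_sq_eq_im_div hm.ne', abs_flowEnergy_le_two m, norm_mul_mSC_flowEnergy hm.le,
    h.semicircleFlow_norm_sq hm.le, ?_, ?_, mSC_im_le_one _⟩
  · calc κ / 16 ≤ (1 / 4) ^ 2 := by linarith
      _ ≤ ‖m‖ ^ 2 := by gcongr
  · linarith [one_sub_half_abs_le_mSC_im (flowEnergy m)]
end

section
/- Exponential decay of the propagator (Lemma 2.19, part 5, first bound): There exist constants c_d, C_d > 0, depending only on d and C₀, such that for every integer L ≥ 2, every t ∈ [0,1), every m ∈ ℂ with |m| = 1, every ξ ∈ {t, t·m², t·conj(m)²}, and every a ∈ ℤ_L^d: |Θ^(B)_ξ(0,a)| ≤ C_d · B_{t,|a|} · exp(−c_d·|a|/ℓ_t). -/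
/-- Periodic L¹ distance on the discrete torus `(ZMod n)^d`. -/
def torusDist {n d : ℕ} (x y : Fin d → ZMod n) : ℕ :=
  ∑ i, min (x i - y i).val (y i - x i).val

/-- The block-level variance matrix `S^(B)` on `ℤ_L^d`, with coupling constant `λ`:
`S^(B)_{ab} = (1+2dλ²)⁻¹ 1_{a=b} + λ²(1+2dλ²)⁻¹ 1_{a∼b}`. -/
noncomputable def SBmat (d L : ℕ) [NeZero L] (lam : ℝ) :
    Matrix (Fin d → ZMod L) (Fin d → ZMod L) ℂ :=
  Matrix.of fun a b =>
    if a = b then ((1 / (1 + 2 * d * lam ^ 2) : ℝ) : ℂ)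
    else if torusDist a b = 1 then ((lam ^ 2 / (1 + 2 * d * lam ^ 2) : ℝ) : ℂ)
    else 0

/-- The propagator `Θ^(B)_ξ := (I − ξ·S^(B))⁻¹`. -/
noncomputable def ThetaB (d L : ℕ) [NeZero L] (lam : ℝ) (ξ : ℂ) :
    Matrix (Fin d → ZMod L) (Fin d → ZMod L) ℂ :=
  ((1 : Matrix (Fin d → ZMod L) (Fin d → ZMod L) ℂ) - ξ • SBmat d L lam)⁻¹

/-- The diffusion length scale `ℓ_t := min((1−t)^{−1/2}, L)`. -/
noncomputable def ellT (L : ℕ) (t : ℝ) : ℝ := min ((1 - t) ^ (-(1 / 2 : ℝ))) (L : ℝ)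

/-- The control parameter `B_{t,K} := (K+1)^{−(d−2)} + 1/(L^d(1−t))`. -/
noncomputable def Bparam (d L : ℕ) (t K : ℝ) : ℝ :=
  ((K + 1) ^ (d - 2))⁻¹ + ((L : ℝ) ^ d * (1 - t))⁻¹

/-!
The entries of `Θ_ξ` are controlled by the maximum principle. For `‖ξ‖ ≤ s < 1` the function
`u b = ‖Θ_ξ(0, b)‖` satisfies `u ≤ δ₀ + s S u`, and `S = 1 + μ Δ` with `Δ` the lattice Laplacian,
so up to a factor `u` lies below every supersolution of `(1 - s - Δ) f = η δ₀`.

Supersolutions are built from `ρ(a) = M + ∑ᵢ w(aᵢ)`, where `w` is a smooth periodic version of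
`x ↦ x²`. To leading order `ρ^{-(d/2-1)}` is harmonic, like `|a|^{-(d-2)}` on `ℝ^d`. When `M` is
large the next order makes its Laplacian at most `-ρ^{-(d/2-1)-2}`, up to an error of relative size
`L⁻²` caused by periodicity. If `1 - s ≫ L⁻²`, the mass absorbs this error and also pays for the
exponential damping. Otherwise the damping is trivial, and the error is absorbed by the less
singular power `L^{-1/2} ρ^{-(d/2-5/4)}`, which is strictly superharmonic where `ρ ≪ L²`, together
with a constant of size `1/(L^d (1 - s))`, the zero mode.

The factor lost in the comparison is of order `1/s`, so for `‖ξ‖ ≤ t` one takes `s = (1 + t)/2`.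
-/

section Comparison

open Matrix

variable {ι : Type*} [Fintype ι]

theorem nonpos_of_le_vecMul {P : Matrix ι ι ℝ} (hP : ∀ a b, 0 ≤ P a b)
    (hsum : ∀ b, ∑ a, P a b < 1) {u : ι → ℝ} (hu : u ≤ u ᵥ* P) : u ≤ 0 := by
  intro b
  obtain ⟨m, -, hm⟩ := Finset.univ.exists_max_image u ⟨b, Finset.mem_univ b⟩
  refine (hm b (Finset.mem_univ b)).trans (le_of_not_gt fun hpos : 0 < u m => ?_)
  have hlt : u m < u m :=
    calc u m ≤ ∑ a, u a * P a m := hu m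
      _ ≤ ∑ a, u m * P a m := by
        gcongr with a ha
        exacts [hP a m, hm a ha]
      _ = u m * ∑ a, P a m := (Finset.mul_sum ..).symm
      _ < u m := mul_lt_of_lt_one_right hpos (hsum m)
  exact hlt.false

variable [DecidableEq ι]

theorem isUnit_det_one_sub_of_sum_norm_lt_one {A : Matrix ι ι ℂ}
    (hA : ∀ b, ∑ a, ‖A a b‖ < 1) : IsUnit (1 - A).det := by
  refine isUnit_iff_ne_zero.2 (det_ne_zero_of_sum_col_lt_diag fun b => ?_)
  have hoff : ∑ a ∈ Finset.univ.erase b, ‖(1 - A) a b‖ = ∑ a ∈ Finset.univ.erase b, ‖A a b‖ :=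
    Finset.sum_congr rfl fun a ha => by
      rw [Matrix.sub_apply, one_apply_ne (Finset.ne_of_mem_erase ha), zero_sub, norm_neg]
  have hdiag : 1 - ‖A b b‖ ≤ ‖(1 - A) b b‖ := by
    simpa using norm_sub_norm_le (1 : ℂ) (A b b)
  have hsplit := Finset.sum_erase_add Finset.univ (fun a => ‖A a b‖) (Finset.mem_univ b)
  linarith [hA b]

theorem norm_inv_one_sub_apply_le {A : Matrix ι ι ℂ} (hA : ∀ b, ∑ a, ‖A a b‖ < 1) {i : ι}
    {f : ι → ℝ} (hf : ∀ b, (if b = i then 1 else 0) + ∑ a, f a * ‖A a b‖ ≤ f b) (b : ι) :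
    ‖(1 - A)⁻¹ i b‖ ≤ f b := by
  set G := (1 - A)⁻¹
  have hresolvent : G = 1 + G * A := by
    have h : G * (1 - A) = 1 := nonsing_inv_mul _ (isUnit_det_one_sub_of_sum_norm_lt_one hA)
    rw [mul_sub, mul_one] at h
    exact sub_eq_iff_eq_add.1 h
  have hG (b : ι) : ‖G i b‖ ≤ (if b = i then 1 else 0) + ∑ a, ‖G i a‖ * ‖A a b‖ :=
    calc ‖G i b‖ = ‖(if i = b then 1 else 0) + ∑ a, G i a * A a b‖ := by
          conv_lhs => rw [hresolvent]
          rw [Matrix.add_apply, one_apply, mul_apply]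
      _ ≤ ‖(if i = b then 1 else 0 : ℂ)‖ + ∑ a, ‖G i a * A a b‖ :=
          (norm_add_le _ _).trans (by gcongr; exact norm_sum_le _ _)
      _ = _ := by simp only [norm_mul, apply_ite norm, norm_one, norm_zero, eq_comm]
  have hdiff : (fun b => ‖G i b‖ - f b) ≤ 0 := by
    refine nonpos_of_le_vecMul (P := of fun a b => ‖A a b‖) (fun a b => norm_nonneg (A a b)) hA
      fun b => ?_
    simp only [vecMul, dotProduct, of_apply, sub_mul, Finset.sum_sub_distrib]
    linarith [hf b, hG b]
  exact sub_nonpos.1 (hdiff b)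

end Comparison

section TorusDistance

variable {d L : ℕ}

theorem exists_eq_piSingle_of_sum_eq_one {ι : Type*} [Fintype ι] [DecidableEq ι] {f : ι → ℕ}
    (hf : ∑ i, f i = 1) : ∃ i, f = Pi.single i 1 := by
  obtain ⟨i, hi⟩ := (Finsupp.sum_eq_one_iff (Finsupp.equivFunOnFinite.symm f)).1
    ((Finsupp.sum_fintype _ _ fun _ => rfl).trans hf)
  exact ⟨i, by simpa [Finsupp.single_eq_pi_single] using congrArg DFunLike.coe hi⟩

theorem torusDist_comm (x y : Fin d → ZMod L) : torusDist x y = torusDist y x :=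
  Finset.sum_congr rfl fun _ _ => min_comm _ _

variable [NeZero L]

theorem torusDist_eq_sum_natAbs (x y : Fin d → ZMod L) :
    torusDist x y = ∑ i, (y i - x i).valMinAbs.natAbs := by
  refine Finset.sum_congr rfl fun i _ => ?_
  rcases eq_or_ne (y i - x i) 0 with h | h
  · rw [← neg_sub (y i) (x i), h]
    simp
  · have : NeZero (y i - x i) := ⟨h⟩
    rw [ZMod.valMinAbs_natAbs_eq_min, ← neg_sub (y i) (x i), ZMod.val_neg_of_ne_zero, min_comm]

theorem torusDist_zero_left (a : Fin d → ZMod L) :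
    torusDist 0 a = ∑ i, (a i).valMinAbs.natAbs := by
  simp only [torusDist_eq_sum_natAbs, Pi.zero_apply, sub_zero]

theorem torusDist_zero_le (a : Fin d → ZMod L) : (torusDist 0 a : ℝ) ≤ d * L := by
  have hcoord (i : Fin d) : (a i).valMinAbs.natAbs ≤ L :=
    (ZMod.natAbs_valMinAbs_le _).trans (Nat.div_le_self L 2)
  calc (torusDist 0 a : ℝ) = ∑ i, ((a i).valMinAbs.natAbs : ℝ) := by
        rw [torusDist_zero_left, Nat.cast_sum]
    _ ≤ ∑ _i : Fin d, (L : ℝ) := by gcongr; exact hcoord _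
    _ = d * L := by simp

theorem exists_eq_add_or_sub_single_of_torusDist_eq_one {x y : Fin d → ZMod L}
    (h : torusDist x y = 1) : ∃ i, y = x + Pi.single i 1 ∨ y = x - Pi.single i 1 := by
  rw [torusDist_eq_sum_natAbs] at h
  obtain ⟨i, hi⟩ := exists_eq_piSingle_of_sum_eq_one h
  have hdiff : y - x = Pi.single i (y i - x i) := by
    ext j
    rcases eq_or_ne j i with rfl | hj
    · simp
    · simpa [hj] using congrFun hi j
  have hval : (y i - x i).valMinAbs.natAbs = 1 := by simpa using congrFun hi i
  rw [← ZMod.coe_valMinAbs (y i - x i)] at hdiff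
  refine ⟨i, (Int.natAbs_eq_iff.1 hval).imp (fun h => ?_) fun h => ?_⟩ <;>
    simp [← sub_eq_iff_eq_add', sub_eq_add_neg x, ← Pi.single_neg, hdiff, h]

end TorusDistance

section Propagator

variable {d L : ℕ}

/-- The nearest-neighbour Laplacian on the torus. -/
def torusLaplacian (f : (Fin d → ZMod L) → ℝ) (a : Fin d → ZMod L) : ℝ :=
  ∑ i, (f (a + Pi.single i 1) + f (a - Pi.single i 1) - 2 * f a)

theorem torusLaplacian_add (f g : (Fin d → ZMod L) → ℝ) (a : Fin d → ZMod L) :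
    torusLaplacian (f + g) a = torusLaplacian f a + torusLaplacian g a := by
  simp only [torusLaplacian, Pi.add_apply, ← Finset.sum_add_distrib]
  congr! 1
  ring

theorem torusLaplacian_const_smul (c : ℝ) (f : (Fin d → ZMod L) → ℝ) (a : Fin d → ZMod L) :
    torusLaplacian (c • f) a = c * torusLaplacian f a := by
  simp only [torusLaplacian, Pi.smul_apply, smul_eq_mul, Finset.mul_sum]
  congr! 1
  ring

theorem torusLaplacian_const (c : ℝ) (a : Fin d → ZMod L) :
    torusLaplacian (fun _ => c) a = 0 :=
  Finset.sum_eq_zero fun _ _ => by ring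

/-- The off-diagonal entry `λ²(1+2dλ²)⁻¹` of `SBmat`. -/
noncomputable def hoppingRate (d : ℕ) (lam : ℝ) : ℝ := lam ^ 2 / (1 + 2 * d * lam ^ 2)

theorem hoppingRate_nonneg (d : ℕ) (lam : ℝ) : 0 ≤ hoppingRate d lam := by
  unfold hoppingRate; positivity

theorem hoppingRate_pos (d : ℕ) {lam : ℝ} (hlam : lam ≠ 0) : 0 < hoppingRate d lam := by
  unfold hoppingRate; positivity

theorem hoppingRate_le_one (hd : 1 ≤ d) (lam : ℝ) : hoppingRate d lam ≤ 1 := by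
  have hd' : (1 : ℝ) ≤ d := by exact_mod_cast hd
  refine div_le_one_of_le₀ ?_ (by positivity)
  nlinarith [mul_le_mul_of_nonneg_right hd' (sq_nonneg lam), sq_nonneg lam]

theorem hoppingRate_mono (d : ℕ) {lam₁ lam₂ : ℝ} (h : |lam₁| ≤ |lam₂|) :
    hoppingRate d lam₁ ≤ hoppingRate d lam₂ := by
  have hsq : lam₁ ^ 2 ≤ lam₂ ^ 2 := sq_le_sq.2 h
  unfold hoppingRate
  rw [div_le_div_iff₀ (by positivity) (by positivity)]
  linarith

theorem one_div_eq_one_sub_hoppingRate (d : ℕ) (lam : ℝ) :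
    1 / (1 + 2 * d * lam ^ 2) = 1 - 2 * d * hoppingRate d lam := by
  have hne : 1 + 2 * (d : ℝ) * lam ^ 2 ≠ 0 := by positivity
  unfold hoppingRate
  field_simp
  ring

/-- A supersolution of `(ε - Δ) f = η δ₀`. By the maximum principle it dominates the propagator up
to a factor. -/
structure IsGreenBarrier (ε η : ℝ) (f : (Fin d → ZMod L) → ℝ) : Prop where
  nonneg : ∀ a, 0 ≤ f a
  source_le : ∀ a, (if a = 0 then η else 0) ≤ ε * f a - torusLaplacian f a

theorem IsGreenBarrier.mono {ε η₁ η₂ : ℝ} {f : (Fin d → ZMod L) → ℝ}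
    (hf : IsGreenBarrier ε η₂ f) (h : η₁ ≤ η₂) : IsGreenBarrier ε η₁ f where
  nonneg := hf.nonneg
  source_le a := (by split_ifs <;> [exact h; rfl] : _ ≤ _).trans (hf.source_le a)

variable [NeZero L]

/-- On `ZMod 2` the neighbours `a + e_i` and `a - e_i` coincide; the right-hand side counts them
twice, so this is only an inequality. -/
theorem norm_SBmat_apply_le (lam : ℝ) (a b : Fin d → ZMod L) :
    ‖SBmat d L lam b a‖ ≤ (if b = a then 1 - 2 * d * hoppingRate d lam else 0) +
      hoppingRate d lam * ∑ i, ((if b = a + Pi.single i 1 then 1 else 0) +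
        if b = a - Pi.single i 1 then 1 else 0) := by
  have hμ := hoppingRate_nonneg d lam
  have hnn (i : Fin d) : (0 : ℝ) ≤ (if b = a + Pi.single i 1 then 1 else 0) +
      if b = a - Pi.single i 1 then 1 else 0 := by positivity
  have hsum := mul_nonneg hμ (Finset.sum_nonneg fun i (_ : i ∈ Finset.univ) => hnn i)
  have hdiag : (0 : ℝ) ≤ 1 / (1 + 2 * d * lam ^ 2) := by positivity
  rw [SBmat, Matrix.of_apply]
  split_ifs with hba hdist
  · rw [Complex.norm_of_nonneg hdiag, one_div_eq_one_sub_hoppingRate]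
    linarith
  · obtain ⟨i, hi⟩ := exists_eq_add_or_sub_single_of_torusDist_eq_one
      ((torusDist_comm a b).trans hdist)
    have hone : (1 : ℝ) ≤ (if b = a + Pi.single i 1 then 1 else 0) +
        if b = a - Pi.single i 1 then 1 else 0 := by
      rcases hi with hi | hi <;> rw [if_pos hi] <;> split_ifs <;> norm_num
    rw [← hoppingRate, Complex.norm_of_nonneg hμ, zero_add]
    exact le_mul_of_one_le_right hμ
      (hone.trans (Finset.single_le_sum (fun i _ => hnn i) (Finset.mem_univ i)))
  · simpa using hsum

theorem sum_mul_norm_SBmat_le (lam : ℝ) {f : (Fin d → ZMod L) → ℝ} (hf : ∀ a, 0 ≤ f a)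
    (a : Fin d → ZMod L) :
    ∑ b, f b * ‖SBmat d L lam b a‖ ≤ f a + hoppingRate d lam * torusLaplacian f a := by
  calc ∑ b, f b * ‖SBmat d L lam b a‖
      ≤ ∑ b, f b * ((if b = a then 1 - 2 * d * hoppingRate d lam else 0) +
          hoppingRate d lam * ∑ i, ((if b = a + Pi.single i 1 then 1 else 0) +
            if b = a - Pi.single i 1 then 1 else 0)) := by
        gcongr with b
        exacts [hf b, norm_SBmat_apply_le lam a b]
    _ = f a * (1 - 2 * d * hoppingRate d lam) +
          hoppingRate d lam * ∑ i, (f (a + Pi.single i 1) + f (a - Pi.single i 1)) := by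
        simp only [mul_add, Finset.sum_add_distrib, mul_left_comm (f _), ← Finset.mul_sum]
        simp only [Finset.mul_sum, Finset.sum_comm (s := Finset.univ (α := Fin d → ZMod L)),
          mul_ite, mul_one, mul_zero, Finset.sum_ite_eq', Finset.mem_univ, if_true]
    _ = f a + hoppingRate d lam * torusLaplacian f a := by
        simp only [torusLaplacian, Finset.sum_sub_distrib, Finset.sum_const, Finset.card_univ,
          Fintype.card_fin, nsmul_eq_mul]
        ring

theorem sum_norm_SBmat_le_one (lam : ℝ) (a : Fin d → ZMod L) :
    ∑ b, ‖SBmat d L lam b a‖ ≤ 1 := by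
  simpa [torusLaplacian_const] using
    sum_mul_norm_SBmat_le lam (f := fun _ => 1) (fun _ => zero_le_one) a

theorem norm_ThetaB_le_of_supersolution {lam s : ℝ} (hs : s < 1) {ξ : ℂ} (hξ : ‖ξ‖ ≤ s)
    {f : (Fin d → ZMod L) → ℝ} (hf : ∀ a, 0 ≤ f a)
    (hsource : ∀ b, (if b = 0 then 1 else 0) + s * ∑ a, f a * ‖SBmat d L lam a b‖ ≤ f b)
    (b : Fin d → ZMod L) : ‖ThetaB d L lam ξ 0 b‖ ≤ f b := by
  have hnorm (a c : Fin d → ZMod L) :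
      ‖(ξ • SBmat d L lam) a c‖ ≤ s * ‖SBmat d L lam a c‖ := by
    rw [Matrix.smul_apply, norm_smul]
    gcongr
  have hs0 : 0 ≤ s := (norm_nonneg ξ).trans hξ
  refine norm_inv_one_sub_apply_le (fun c => ?_) (fun c => ?_) b
  · calc ∑ a, ‖(ξ • SBmat d L lam) a c‖ ≤ ∑ a, s * ‖SBmat d L lam a c‖ := by
          gcongr; exact hnorm _ c
      _ ≤ s := by
          rw [← Finset.mul_sum]
          exact mul_le_of_le_one_right hs0 (sum_norm_SBmat_le_one lam c)
      _ < 1 := hs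
  · calc (if c = 0 then 1 else 0) + ∑ a, f a * ‖(ξ • SBmat d L lam) a c‖
        ≤ (if c = 0 then 1 else 0) + ∑ a, f a * (s * ‖SBmat d L lam a c‖) := by
          gcongr with a
          exacts [hf a, hnorm a c]
      _ = (if c = 0 then 1 else 0) + s * ∑ a, f a * ‖SBmat d L lam a c‖ := by
          simp only [Finset.mul_sum, mul_left_comm (f _)]
      _ ≤ f c := hsource c

theorem IsGreenBarrier.norm_ThetaB_le {η s lam : ℝ} {f : (Fin d → ZMod L) → ℝ}
    (hf : IsGreenBarrier (1 - s) η f) (hη : 0 < η) (hd : 1 ≤ d) (hlam : lam ≠ 0) (hs : 0 < s)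
    (hs1 : s < 1) {ξ : ℂ} (hξ : ‖ξ‖ ≤ s) (a : Fin d → ZMod L) :
    ‖ThetaB d L lam ξ 0 a‖ ≤ (η * (s * hoppingRate d lam))⁻¹ * f a := by
  have hμ := hoppingRate_pos d hlam
  set μ := hoppingRate d lam
  refine norm_ThetaB_le_of_supersolution (f := fun a => (η * (s * μ))⁻¹ * f a) hs1 hξ
    (fun b => mul_nonneg (by positivity) (hf.nonneg b)) (fun b => ?_) a
  have hsource : (if b = 0 then 1 else 0) ≤ η⁻¹ * ((1 - s) * f b - torusLaplacian f b) := by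
    rw [le_inv_mul_iff₀ hη]
    simpa using hf.source_le b
  have hmass : η⁻¹ * ((1 - s) * f b) ≤ (η * (s * μ))⁻¹ * ((1 - s) * f b) := by
    have hmass_nonneg : 0 ≤ (1 - s) * f b := mul_nonneg (sub_nonneg.2 hs1.le) (hf.nonneg b)
    have hsμ : s * μ ≤ 1 := mul_le_one₀ hs1.le hμ.le (hoppingRate_le_one hd lam)
    gcongr
    exact mul_le_of_le_one_right hη.le hsμ
  calc (if b = 0 then 1 else 0) + s * ∑ c, (η * (s * μ))⁻¹ * f c * ‖SBmat d L lam c b‖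
      = (if b = 0 then 1 else 0) + (η * μ)⁻¹ * ∑ c, f c * ‖SBmat d L lam c b‖ := by
        simp only [mul_assoc, ← Finset.mul_sum]
        field_simp
    _ ≤ (if b = 0 then 1 else 0) + (η * μ)⁻¹ * (f b + μ * torusLaplacian f b) := by
        gcongr
        exact sum_mul_norm_SBmat_le lam hf.nonneg b
    _ ≤ η⁻¹ * ((1 - s) * f b) + (η * μ)⁻¹ * f b := by
        have hcancel : (η * μ)⁻¹ * μ = η⁻¹ := by field_simp
        linear_combination hsource + torusLaplacian f b * hcancel
    _ ≤ (η * (s * μ))⁻¹ * ((1 - s) * f b) + (η * μ)⁻¹ * f b := by gcongr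
    _ = (η * (s * μ))⁻¹ * f b := by field_simp; ring

end Propagator

section PeriodicSquare

open Real

/-- The spectral gap of simple random walk on the cycle `ZMod L`, of order `L⁻²`. -/
noncomputable def cycleGap (L : ℕ) : ℝ := 1 - cos (2 * π / L)

/-- A smooth periodic substitute for `x ↦ x²` on `ZMod L`: an affine function of the first Fourier
mode, normalized so that it vanishes at `0` and equals `1` at `±1`. -/
noncomputable def periodicSq {L : ℕ} [NeZero L] (x : ZMod L) : ℝ :=
  (1 - (ZMod.stdAddChar x).re) / cycleGap L

theorem cycleGap_le_two (L : ℕ) : cycleGap L ≤ 2 := by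
  unfold cycleGap
  linarith [neg_one_le_cos (2 * π / L)]

theorem cycleGap_nonneg (L : ℕ) : 0 ≤ cycleGap L := sub_nonneg.2 (cos_le_one _)

theorem cycleGap_le_div_sq (L : ℕ) : cycleGap L ≤ 20 / (L : ℝ) ^ 2 := by
  have hπ : π ^ 2 ≤ 10 := by nlinarith [pi_lt_d2, pi_pos]
  calc cycleGap L ≤ (2 * π / L) ^ 2 / 2 := by
        unfold cycleGap
        linarith [one_sub_sq_div_two_le_cos (x := 2 * π / L)]
    _ = 2 * π ^ 2 / (L : ℝ) ^ 2 := by ring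
    _ ≤ 20 / (L : ℝ) ^ 2 := by gcongr; linarith

theorem cycleGap_pos {L : ℕ} (hL : 2 ≤ L) : 0 < cycleGap L := by
  have hL' : (2 : ℝ) ≤ L := by exact_mod_cast hL
  have hle : 2 * π / L ≤ π := by
    rw [div_le_iff₀ (by positivity)]
    nlinarith [pi_pos]
  have hcos : cos (2 * π / L) < cos 0 :=
    cos_lt_cos_of_nonneg_of_le_pi le_rfl hle (by positivity)
  rw [cos_zero] at hcos
  exact sub_pos.2 hcos

variable {L : ℕ} [NeZero L]

theorem re_stdAddChar_intCast (j : ℤ) :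
    (ZMod.stdAddChar (j : ZMod L)).re = cos (2 * π / L * j) := by
  rw [ZMod.stdAddChar_coe, ← Complex.exp_ofReal_mul_I_re]
  congr 2
  push_cast
  ring

theorem re_sq_add_im_sq_stdAddChar (x : ZMod L) :
    (ZMod.stdAddChar x).re ^ 2 + (ZMod.stdAddChar x).im ^ 2 = 1 := by
  rw [pow_two, pow_two, ← Complex.normSq_apply, Complex.normSq_eq_norm_sq, AddChar.norm_apply,
    one_pow]

theorem periodicSq_zero : periodicSq (0 : ZMod L) = 0 := by
  simp [periodicSq]

theorem periodicSq_nonneg (x : ZMod L) : 0 ≤ periodicSq x :=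
  div_nonneg (by nlinarith [re_sq_add_im_sq_stdAddChar x]) (cycleGap_nonneg L)

theorem cycleGap_mul_periodicSq (hL : 2 ≤ L) (x : ZMod L) :
    cycleGap L * periodicSq x = 1 - (ZMod.stdAddChar x).re :=
  mul_div_cancel₀ _ (cycleGap_pos hL).ne'

theorem cycleGap_mul_periodicSq_le (hL : 2 ≤ L) (x : ZMod L) :
    cycleGap L * periodicSq x ≤ 2 := by
  rw [cycleGap_mul_periodicSq hL]
  nlinarith [re_sq_add_im_sq_stdAddChar x]

theorem valMinAbs_sq_le (hL : 2 ≤ L) (x : ZMod L) :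
    (x.valMinAbs : ℝ) ^ 2 ≤ 3 * periodicSq x := by
  set j := x.valMinAbs with hj
  have hL0 : (0 : ℝ) < L := by exact_mod_cast pos_of_gt hL
  have hangle : |2 * π / L * j| ≤ π := by
    have hhalf : 2 * |(j : ℝ)| ≤ L := by
      have h := ZMod.natAbs_valMinAbs_le x
      have : 2 * |j| ≤ (L : ℤ) := by rw [Int.abs_eq_natAbs]; omega
      exact_mod_cast this
    rw [abs_mul, abs_of_nonneg (by positivity), div_mul_eq_mul_div, div_le_iff₀ hL0]
    nlinarith [pi_pos]
  have hcos : 8 * (j : ℝ) ^ 2 / L ^ 2 ≤ cycleGap L * periodicSq x := by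
    have h := cos_le_one_sub_mul_cos_sq hangle
    rw [cycleGap_mul_periodicSq hL, ← ZMod.coe_valMinAbs x, re_stdAddChar_intCast, ← hj]
    calc 8 * (j : ℝ) ^ 2 / L ^ 2 = 2 / π ^ 2 * (2 * π / L * j) ^ 2 := by
          field_simp; ring
      _ ≤ _ := by linarith
  have hgap : cycleGap L * periodicSq x ≤ 20 / L ^ 2 * periodicSq x :=
    mul_le_mul_of_nonneg_right (cycleGap_le_div_sq L) (periodicSq_nonneg x)
  have := hcos.trans hgap
  rw [div_mul_eq_mul_div, div_le_div_iff_of_pos_right (by positivity)] at this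
  nlinarith [periodicSq_nonneg x]

/-- By the addition formulas for `χ (x ± 1)`, where `χ` is the first Fourier mode, the two
increments of `periodicSq` at `x` are symmetric about `Re χ(x)`. -/
theorem exists_periodicSq_increments (hL : 2 ≤ L) (x : ZMod L) :
    ∃ σ : ℝ, σ ^ 2 ≤ 4 * periodicSq x ∧
      periodicSq (x + 1) - periodicSq x = 1 - cycleGap L * periodicSq x + σ ∧
      periodicSq (x - 1) - periodicSq x = 1 - cycleGap L * periodicSq x - σ := by
  have hδ := (cycleGap_pos hL).ne'
  have hχ := re_sq_add_im_sq_stdAddChar x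
  have hζ := re_sq_add_im_sq_stdAddChar (1 : ZMod L)
  have hre : (ZMod.stdAddChar (1 : ZMod L)).re = 1 - cycleGap L := by
    simpa [cycleGap] using re_stdAddChar_intCast (L := L) 1
  have hsub : ZMod.stdAddChar (x - 1) =
      ZMod.stdAddChar x * (starRingEnd ℂ) (ZMod.stdAddChar (1 : ZMod L)) := by
    rw [sub_eq_add_neg, AddChar.map_add_eq_mul, AddChar.map_neg_eq_conj]
  refine ⟨(ZMod.stdAddChar x).im * (ZMod.stdAddChar (1 : ZMod L)).im / cycleGap L, ?_, ?_, ?_⟩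
  · have hw := cycleGap_mul_periodicSq hL x
    have him : (ZMod.stdAddChar x).im ^ 2 =
        cycleGap L * periodicSq x * (2 - cycleGap L * periodicSq x) := by
      rw [hw]
      linear_combination hχ
    rw [hre] at hζ
    have hσ : ((ZMod.stdAddChar x).im * (ZMod.stdAddChar (1 : ZMod L)).im / cycleGap L) ^ 2 =
        periodicSq x * ((2 - cycleGap L * periodicSq x) * (2 - cycleGap L)) := by
      rw [div_pow, mul_pow, him, div_eq_iff (pow_ne_zero 2 hδ)]
      linear_combination cycleGap L * periodicSq x * (2 - cycleGap L * periodicSq x) * hζ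
    rw [hσ, mul_comm 4]
    have hz := mul_nonneg (cycleGap_nonneg L) (periodicSq_nonneg x)
    gcongr
    · exact periodicSq_nonneg x
    · nlinarith [cycleGap_nonneg L, cycleGap_le_two L]
  · rw [cycleGap_mul_periodicSq hL, periodicSq, periodicSq, AddChar.map_add_eq_mul, Complex.mul_re,
      hre]
    field_simp
    ring
  · rw [cycleGap_mul_periodicSq hL, periodicSq, periodicSq, hsub, Complex.mul_re, Complex.conj_re,
      Complex.conj_im, hre]
    field_simp
    ring

theorem periodicSq_add_one_add_sub_one (hL : 2 ≤ L) (x : ZMod L) :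
    (periodicSq (x + 1) - periodicSq x) + (periodicSq (x - 1) - periodicSq x) =
      2 - 2 * (cycleGap L * periodicSq x) := by
  obtain ⟨σ, -, hp, hq⟩ := exists_periodicSq_increments hL x
  rw [hp, hq]
  ring

theorem periodicSq_increments_sq_le (hL : 2 ≤ L) (x : ZMod L) :
    (periodicSq (x + 1) - periodicSq x) ^ 2 + (periodicSq (x - 1) - periodicSq x) ^ 2 ≤
      2 + 8 * periodicSq x := by
  obtain ⟨σ, hσ, hp, hq⟩ := exists_periodicSq_increments hL x
  have hw := periodicSq_nonneg x
  have hz := mul_nonneg (cycleGap_nonneg L) hw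
  have hz2 := cycleGap_mul_periodicSq_le hL x
  rw [hp, hq]
  nlinarith

theorem periodicSq_increments_cube_ge (hL : 2 ≤ L) (x : ZMod L) :
    -(24 * cycleGap L * (1 + periodicSq x) ^ 2) ≤
      (periodicSq (x + 1) - periodicSq x) ^ 3 + (periodicSq (x - 1) - periodicSq x) ^ 3 := by
  obtain ⟨σ, hσ, hp, hq⟩ := exists_periodicSq_increments hL x
  have hw := periodicSq_nonneg x
  set z := cycleGap L * periodicSq x
  have hz : 0 ≤ z := mul_nonneg (cycleGap_nonneg L) hw
  have hz2 : z ≤ 2 := cycleGap_mul_periodicSq_le hL x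
  have hcube : -z ≤ (1 - z) ^ 3 := by
    nlinarith [mul_nonneg (sq_nonneg z) (sub_nonneg.2 hz2), sq_nonneg (1 - z)]
  have hcross : -(4 * z * periodicSq x) ≤ (1 - z) * σ ^ 2 := by nlinarith [sq_nonneg σ]
  have hgap := mul_nonneg (cycleGap_nonneg L) (by linarith : 0 ≤ 24 + 46 * periodicSq x)
  rw [hp, hq]
  linarith

end PeriodicSquare

section SecondDifferences

open Real

theorem exists_abs_one_add_rpow_sub_sum_le (a : ℝ) (n : ℕ) :
    ∃ K : ℝ, 0 ≤ K ∧ ∀ v : ℝ, |v| ≤ 1 / 2 →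
      |(1 + v) ^ a - ∑ k ∈ Finset.range n, Ring.choose a k * v ^ k| ≤ K * |v| ^ n := by
  obtain ⟨b, hb, C, hC, hbound⟩ :=
    (one_add_rpow_hasFPowerSeriesOnBall_zero (a := a)).uniform_geometric_approx'
      (r' := 3 / 4) (by exact_mod_cast (by norm_num : (3 / 4 : NNReal) < 1))
  refine ⟨C * (b / (3 / 4)) ^ n, by have := hb.1; positivity, fun v hv => ?_⟩
  have hv' : v ∈ Metric.ball (0 : ℝ) ((3 / 4 : NNReal) : ℝ) := by
    rw [mem_ball_zero_iff, norm_eq_abs]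
    push_cast
    linarith
  have h := hbound v hv' n
  simp only [zero_add, norm_eq_abs, FormalMultilinearSeries.partialSum, binomialSeries_apply,
    List.ofFn_const, List.prod_replicate, smul_eq_mul] at h
  calc |(1 + v) ^ a - ∑ k ∈ Finset.range n, Ring.choose a k * v ^ k|
      ≤ C * (b * (|v| / (3 / 4 : NNReal))) ^ n := h
    _ = C * (b / (3 / 4)) ^ n * |v| ^ n := by
      push_cast
      ring

theorem choose_two_eq (a : ℝ) : Ring.choose a 2 = a * (a - 1) / 2 := by
  have h := Ring.choose_smul_choose a one_le_two
  simp only [Nat.choose_one_right, Ring.choose_one_right, nsmul_eq_mul, Nat.cast_ofNat,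
    Nat.cast_one, Nat.reduceSub] at h
  linarith

theorem choose_three_eq (a : ℝ) : Ring.choose a 3 = a * (a - 1) * (a - 2) / 6 := by
  have h := Ring.choose_smul_choose a (show 1 ≤ 3 by norm_num)
  simp only [Nat.choose_one_right, Ring.choose_one_right, nsmul_eq_mul, Nat.cast_ofNat,
    Nat.cast_one, Nat.reduceSub, choose_two_eq] at h
  linarith

/-- The second difference of `F` at `r` with increments `p` and `q`. -/
def secondDiff (F : ℝ → ℝ) (r p q : ℝ) : ℝ := F (r + p) + F (r + q) - 2 * F r

theorem secondDiff_mul (F G : ℝ → ℝ) (r p q : ℝ) :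
    secondDiff (F * G) r p q = G r * secondDiff F r p q + F r * secondDiff G r p q +
      ((F (r + p) - F r) * (G (r + p) - G r) + (F (r + q) - F r) * (G (r + q) - G r)) := by
  simp only [secondDiff, Pi.mul_apply]
  ring

theorem abs_div_le_half {r p : ℝ} (hr : 32 ≤ r) (hp : p ^ 2 ≤ 8 * r) : |p / r| ≤ 1 / 2 := by
  refine abs_le_of_sq_le_sq ?_ (by norm_num)
  rw [div_pow, div_le_iff₀ (by positivity)]
  nlinarith

theorem add_rpow_eq {r p : ℝ} (hr : 32 ≤ r) (hp : p ^ 2 ≤ 8 * r) (a : ℝ) :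
    (r + p) ^ a = r ^ a * (1 + p / r) ^ a := by
  have h := (abs_le.1 (abs_div_le_half hr hp)).1
  rw [← mul_rpow (by linarith) (by linarith)]
  congr 1
  field_simp

theorem exists_abs_rpow_increment_le (a : ℝ) :
    ∃ K : ℝ, 0 ≤ K ∧ ∀ r p : ℝ, 32 ≤ r → p ^ 2 ≤ 8 * r →
      |(r + p) ^ a - r ^ a| ≤ K * r ^ a * (|p| / r) := by
  obtain ⟨K, hK, hK'⟩ := exists_abs_one_add_rpow_sub_sum_le a 1
  refine ⟨K, hK, fun r p hr hp => ?_⟩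
  have hr0 : 0 < r := by linarith
  have h := hK' _ (abs_div_le_half hr hp)
  simp only [Finset.range_one, Finset.sum_singleton, Ring.choose_zero_right, pow_zero, mul_one,
    pow_one, abs_div, abs_of_pos hr0] at h
  calc |(r + p) ^ a - r ^ a| = r ^ a * |(1 + p / r) ^ a - 1| := by
        rw [add_rpow_eq hr hp, ← mul_sub_one, abs_mul, abs_of_nonneg (by positivity)]
    _ ≤ r ^ a * (K * (|p| / r)) := by gcongr
    _ = K * r ^ a * (|p| / r) := by ring

theorem exists_rpow_taylor_three (a : ℝ) :
    ∃ K : ℝ, 0 ≤ K ∧ ∀ r p : ℝ, 32 ≤ r → p ^ 2 ≤ 8 * r →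
      (r + p) ^ a - r ^ a ≤ r ^ a * (a * p / r + a * (a - 1) / 2 * p ^ 2 / r ^ 2 +
        a * (a - 1) * (a - 2) / 6 * p ^ 3 / r ^ 3 + K / r ^ 2) := by
  obtain ⟨K, hK, hK'⟩ := exists_abs_one_add_rpow_sub_sum_le a 4
  refine ⟨64 * K, by positivity, fun r p hr hp => ?_⟩
  have h := (abs_le.1 (hK' _ (abs_div_le_half hr hp))).2
  simp only [Finset.sum_range_succ, Finset.sum_range_zero, Ring.choose_zero_right,
    Ring.choose_one_right, choose_two_eq, choose_three_eq] at h
  have hfour : |p / r| ^ 4 ≤ 64 / r ^ 2 := by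
    calc |p / r| ^ 4 = (p ^ 2) ^ 2 / r ^ 4 := by
          rw [← abs_pow, abs_of_nonneg (by positivity)]
          ring
      _ ≤ (8 * r) ^ 2 / r ^ 4 := by gcongr
      _ = 64 / r ^ 2 := by field_simp; ring
  rw [add_rpow_eq hr hp, ← mul_sub_one]
  gcongr
  linear_combination h + K * hfour

theorem exists_secondDiff_rpow_le (a : ℝ) :
    ∃ K : ℝ, 0 ≤ K ∧ ∀ r p q : ℝ, 32 ≤ r → p ^ 2 ≤ 8 * r → q ^ 2 ≤ 8 * r →
      secondDiff (· ^ a) r p q ≤ r ^ a * (a * (p + q) / r +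
        a * (a - 1) / 2 * (p ^ 2 + q ^ 2) / r ^ 2 +
        a * (a - 1) * (a - 2) / 6 * (p ^ 3 + q ^ 3) / r ^ 3 + K / r ^ 2) := by
  obtain ⟨K, hK, hK'⟩ := exists_rpow_taylor_three a
  refine ⟨2 * K, by positivity, fun r p q hr hp hq => ?_⟩
  simp only [secondDiff]
  linear_combination hK' r p hr hp + hK' r q hr hq

end SecondDifferences

section ExponentialWeight

open Real

/-- The weight `exp(-√(1 + k r))`, which at `r ≈ |a|²` is a smooth form of `exp(-√k |a|)`. -/
noncomputable def expWeight (k r : ℝ) : ℝ := exp (-√(1 + k * r))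

theorem expWeight_pos (k r : ℝ) : 0 < expWeight k r := exp_pos _

variable {k r p q : ℝ}

theorem one_le_sqrt_one_add_mul (hk : 0 ≤ k) (hr : 0 ≤ r) : 1 ≤ √(1 + k * r) :=
  one_le_sqrt.2 (by linarith [mul_nonneg hk hr])

theorem expWeight_le_exp_neg_sqrt : expWeight k r ≤ exp (-√(k * r)) := by
  unfold expWeight
  gcongr
  linarith

theorem sqrt_increment_bounds (hk : 0 ≤ k) (hr : 32 ≤ r) (hp : p ^ 2 ≤ 8 * r) {x : ℝ}
    (hx : x = √(1 + k * (r + p)) - √(1 + k * r)) :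
    |x| ≤ k * |p| ∧ x ^ 2 ≤ 8 * k ∧ k * p / (2 * √(1 + k * r)) ≤ x + x ^ 2 / 2 := by
  have hr0 : 0 ≤ r := by linarith
  have hrp : 0 ≤ r + p := by
    have hpr : |p| ≤ r := abs_le_of_sq_le_sq (by nlinarith) hr0
    linarith [(abs_le.1 hpr).1]
  have hA : 1 ≤ √(1 + k * r) := one_le_sqrt_one_add_mul hk hr0
  have hB : 1 ≤ √(1 + k * (r + p)) := one_le_sqrt_one_add_mul hk hrp
  have hA2 : √(1 + k * r) ^ 2 = 1 + k * r := sq_sqrt (by positivity)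
  have hB2 : √(1 + k * (r + p)) ^ 2 = 1 + k * (r + p) := sq_sqrt (by positivity)
  set A := √(1 + k * r)
  set B := √(1 + k * (r + p))
  have hprod : x * (A + B) = k * p := by
    rw [hx]
    linear_combination hB2 - hA2
  refine ⟨?_, ?_, ?_⟩
  · calc |x| ≤ |x| * (A + B) := le_mul_of_one_le_right (abs_nonneg x) (by linarith)
      _ = |x * (A + B)| := by rw [abs_mul, abs_of_pos (by linarith : 0 < A + B)]
      _ = k * |p| := by rw [hprod, abs_mul, abs_of_nonneg hk]
  · refine le_of_mul_le_mul_right (a := A ^ 2) ?_ (by positivity)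
    calc x ^ 2 * A ^ 2 ≤ x ^ 2 * (A + B) ^ 2 := by gcongr; linarith
      _ = k ^ 2 * p ^ 2 := by rw [← mul_pow, hprod, mul_pow]
      _ ≤ k ^ 2 * (8 * r) := by gcongr
      _ ≤ 8 * k * A ^ 2 := by rw [hA2]; nlinarith
  · rw [div_le_iff₀ (by positivity), ← hprod]
    have hBx : B = A + x := by rw [hx]; ring
    rw [hBx]
    nlinarith [mul_le_mul_of_nonneg_left hA (sq_nonneg x)]

theorem expWeight_increment_bounds (hk : 0 ≤ k) (hk' : k ≤ 1 / 8) (hr : 32 ≤ r)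
    (hp : p ^ 2 ≤ 8 * r) :
    |expWeight k (r + p) - expWeight k r| ≤ expWeight k r * (2 * k * |p|) ∧
      expWeight k (r + p) - expWeight k r ≤
        expWeight k r * (12 * k - k * p / (2 * √(1 + k * r))) := by
  obtain ⟨x, hx⟩ : ∃ x, x = √(1 + k * (r + p)) - √(1 + k * r) := ⟨_, rfl⟩
  obtain ⟨hxp, hx2, hlin⟩ := sqrt_increment_bounds hk hr hp hx
  have hx1 : |-x| ≤ 1 := by
    rw [abs_neg]
    exact abs_le_of_sq_le_sq (by linarith) zero_le_one
  have heq : expWeight k (r + p) - expWeight k r = expWeight k r * (exp (-x) - 1) := by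
    rw [mul_sub_one, expWeight, expWeight, ← exp_add, hx]
    ring_nf
  have hpos := expWeight_pos k r
  rw [heq, abs_mul, abs_of_pos hpos]
  constructor <;> refine mul_le_mul_of_nonneg_left ?_ hpos.le
  · have := abs_exp_sub_one_le hx1
    rw [abs_neg] at this
    linarith
  · have := (abs_le.1 (abs_exp_sub_one_sub_id_le hx1)).2
    linarith

theorem secondDiff_expWeight_le (hk : 0 ≤ k) (hk' : k ≤ 1 / 8) (hr : 32 ≤ r)
    (hp : p ^ 2 ≤ 8 * r) (hq : q ^ 2 ≤ 8 * r) (hpq : -2 ≤ p + q) :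
    secondDiff (expWeight k) r p q ≤ 25 * k * expWeight k r := by
  have hsum : -(k * p / (2 * √(1 + k * r)) + k * q / (2 * √(1 + k * r))) ≤ k := by
    have hs := one_le_sqrt_one_add_mul hk (by linarith : 0 ≤ r)
    rw [← add_div, ← neg_div, div_le_iff₀ (by positivity)]
    nlinarith [mul_le_mul_of_nonneg_left hpq hk, mul_le_mul_of_nonneg_left hs hk]
  unfold secondDiff
  linear_combination (expWeight_increment_bounds hk hk' hr hp).2 +
    (expWeight_increment_bounds hk hk' hr hq).2 +
    mul_le_mul_of_nonneg_left hsum (expWeight_pos k r).le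

theorem exists_secondDiff_rpow_mul_expWeight_le (a : ℝ) :
    ∃ K : ℝ, 0 ≤ K ∧ ∀ k r p q : ℝ, 0 ≤ k → k ≤ 1 / 8 → 32 ≤ r → p ^ 2 ≤ 8 * r →
      q ^ 2 ≤ 8 * r → -2 ≤ p + q →
      secondDiff ((· ^ a) * expWeight k) r p q ≤
        expWeight k r * (secondDiff (· ^ a) r p q + K * k * r ^ a) := by
  obtain ⟨K, hK, hK'⟩ := exists_abs_rpow_increment_le a
  refine ⟨25 + 32 * K, by positivity, fun k r p q hk hk' hr hp hq hpq => ?_⟩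
  have hr0 : 0 < r := by linarith
  have hcross (u : ℝ) (hu : u ^ 2 ≤ 8 * r) :
      ((r + u) ^ a - r ^ a) * (expWeight k (r + u) - expWeight k r) ≤
        expWeight k r * (16 * K * k * r ^ a) := by
    have hE := expWeight_pos k r
    calc ((r + u) ^ a - r ^ a) * (expWeight k (r + u) - expWeight k r)
        ≤ |(r + u) ^ a - r ^ a| * |expWeight k (r + u) - expWeight k r| := by
          rw [← abs_mul]
          exact le_abs_self _
      _ ≤ (K * r ^ a * (|u| / r)) * (expWeight k r * (2 * k * |u|)) := by
          gcongr
          exacts [hK' r u hr hu, (expWeight_increment_bounds hk hk' hr hu).1]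
      _ = expWeight k r * (2 * K * k * r ^ a * (u ^ 2 / r)) := by
          rw [← sq_abs u]
          ring
      _ ≤ expWeight k r * (2 * K * k * r ^ a * 8) := by
          gcongr
          rwa [div_le_iff₀ hr0]
      _ = expWeight k r * (16 * K * k * r ^ a) := by ring
  rw [secondDiff_mul]
  linear_combination hcross p hp + hcross q hq +
    r ^ a * secondDiff_expWeight_le hk hk' hr hp hq hpq

end ExponentialWeight

section ShiftedSquare

open Filter

variable {d L : ℕ} [NeZero L]

/-- A smooth periodic substitute for `a ↦ M + |a|²` on the torus. -/
noncomputable def shiftedSq (M : ℝ) (a : Fin d → ZMod L) : ℝ := M + ∑ i, periodicSq (a i)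

theorem shiftedSq_zero (M : ℝ) : shiftedSq M (0 : Fin d → ZMod L) = M := by
  simp [shiftedSq, periodicSq_zero]

theorem add_periodicSq_le_shiftedSq (M : ℝ) (a : Fin d → ZMod L) (i : Fin d) :
    M + periodicSq (a i) ≤ shiftedSq M a :=
  add_le_add_right
    (Finset.single_le_sum (fun j _ => periodicSq_nonneg (a j)) (Finset.mem_univ i)) M

theorem le_shiftedSq (M : ℝ) (a : Fin d → ZMod L) : M ≤ shiftedSq M a :=
  le_add_of_nonneg_right (Finset.sum_nonneg fun i _ => periodicSq_nonneg (a i))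

theorem cycleGap_mul_shiftedSq_le (hL : 2 ≤ L) {M : ℝ} (hM : 0 ≤ M) (a : Fin d → ZMod L) :
    cycleGap L * shiftedSq M a ≤ 2 * M + 2 * d := by
  calc cycleGap L * shiftedSq M a
      = cycleGap L * M + ∑ i, cycleGap L * periodicSq (a i) := by
        rw [shiftedSq, mul_add, Finset.mul_sum]
    _ ≤ 2 * M + ∑ _i : Fin d, 2 := by
        gcongr with i
        exacts [cycleGap_le_two L, cycleGap_mul_periodicSq_le hL (a i)]
    _ = 2 * M + 2 * d := by simp [mul_comm]

theorem torusDist_add_one_sq_le (hd : 1 ≤ d) (hL : 2 ≤ L) {M : ℝ} (hM : 1 ≤ M)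
    (a : Fin d → ZMod L) : ((torusDist 0 a : ℝ) + 1) ^ 2 ≤ 6 * d * shiftedSq M a := by
  have hd' : (1 : ℝ) ≤ d := by exact_mod_cast hd
  have hcs : (torusDist 0 a : ℝ) ^ 2 ≤ 3 * d * ∑ i, periodicSq (a i) :=
    calc (torusDist 0 a : ℝ) ^ 2 = (∑ i, ((a i).valMinAbs.natAbs : ℝ)) ^ 2 := by
          rw [torusDist_zero_left, Nat.cast_sum]
      _ ≤ d * ∑ i, ((a i).valMinAbs.natAbs : ℝ) ^ 2 := by
          simpa using sq_sum_le_card_mul_sum_sq (s := Finset.univ)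
            (f := fun i => ((a i).valMinAbs.natAbs : ℝ))
      _ ≤ d * ∑ i, 3 * periodicSq (a i) := by
          gcongr with i
          rw [Nat.cast_natAbs, Int.cast_abs, sq_abs]
          exact valMinAbs_sq_le hL (a i)
      _ = 3 * d * ∑ i, periodicSq (a i) := by
          rw [← Finset.mul_sum]
          ring
  unfold shiftedSq
  nlinarith [sq_nonneg ((torusDist 0 a : ℝ) - 1), mul_le_mul hd' hM zero_le_one (by linarith)]

theorem shiftedSq_add_single (M : ℝ) (a : Fin d → ZMod L) (i : Fin d) (x : ZMod L) :
    shiftedSq M (a + Pi.single i x) =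
      shiftedSq M a + (periodicSq (a i + x) - periodicSq (a i)) := by
  have hsum : ∑ j, (periodicSq ((a + Pi.single i x : Fin d → ZMod L) j) - periodicSq (a j)) =
      periodicSq (a i + x) - periodicSq (a i) := by
    rw [Fintype.sum_eq_single i fun j hj => by simp [hj]]
    simp
  rw [shiftedSq, shiftedSq, ← hsum, Finset.sum_sub_distrib]
  ring

theorem torusLaplacian_comp_shiftedSq (F : ℝ → ℝ) (M : ℝ) (a : Fin d → ZMod L) :
    torusLaplacian (F ∘ shiftedSq M) a =
      ∑ i, secondDiff F (shiftedSq M a) (periodicSq (a i + 1) - periodicSq (a i))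
        (periodicSq (a i - 1) - periodicSq (a i)) := by
  simp only [torusLaplacian, secondDiff, Function.comp_apply, sub_eq_add_neg a, ← Pi.single_neg,
    shiftedSq_add_single, ← sub_eq_add_neg]

theorem periodicSq_increment_sq_le (hL : 2 ≤ L) (x : ZMod L) {r : ℝ}
    (hr : 32 + periodicSq x ≤ r) :
    (periodicSq (x + 1) - periodicSq x) ^ 2 ≤ 8 * r ∧
      (periodicSq (x - 1) - periodicSq x) ^ 2 ≤ 8 * r := by
  have h := periodicSq_increments_sq_le hL x
  constructor <;> nlinarith

theorem exists_secondDiff_rpow_periodicSq_le {γ : ℝ} (hγ : 0 < γ) :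
    ∃ K : ℝ, 0 ≤ K ∧ ∀ (L : ℕ) [NeZero L], 2 ≤ L → ∀ (x : ZMod L) (r : ℝ),
      32 + periodicSq x ≤ r →
      secondDiff (· ^ (-γ)) r (periodicSq (x + 1) - periodicSq x)
          (periodicSq (x - 1) - periodicSq x) ≤
        r ^ (-γ) * (-(2 * γ) / r + (4 * γ * (γ + 1) * periodicSq x + K) / r ^ 2 +
          K * cycleGap L) := by
  obtain ⟨K, hK, hK'⟩ := exists_secondDiff_rpow_le (-γ)
  refine ⟨γ * (γ + 1) + K + (2 * γ + 4 * γ * (γ + 1) * (γ + 2)), by positivity,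
    fun L _ hL x r hr => ?_⟩
  have hw := periodicSq_nonneg x
  have hδ := cycleGap_nonneg L
  have hr0 : 0 < r := by linarith
  obtain ⟨hp, hq⟩ := periodicSq_increment_sq_le hL x hr
  have hsum := periodicSq_add_one_add_sub_one hL x
  have hsq := periodicSq_increments_sq_le hL x
  have hcube := periodicSq_increments_cube_ge hL x
  refine (hK' r _ _ (by linarith) hp hq).trans (mul_le_mul_of_nonneg_left ?_ (by positivity))
  rw [hsum]
  set w := periodicSq x
  set δ := cycleGap L
  have hfirst : -γ * (2 - 2 * (δ * w)) / r ≤ -(2 * γ) / r + 2 * γ * δ := by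
    have hwr : w / r ≤ 1 := div_le_one_of_le₀ (by linarith) hr0.le
    linear_combination 2 * γ * δ * hwr
  set P := periodicSq (x + 1) - w
  set Q := periodicSq (x - 1) - w
  have hsecond : -γ * (-γ - 1) / 2 * (P ^ 2 + Q ^ 2) / r ^ 2 ≤
      (4 * γ * (γ + 1) * w + γ * (γ + 1)) / r ^ 2 := by
    gcongr
    nlinarith [mul_le_mul_of_nonneg_left hsq (show 0 ≤ γ * (γ + 1) / 2 by positivity)]
  have hthird : -γ * (-γ - 1) * (-γ - 2) / 6 * (P ^ 3 + Q ^ 3) / r ^ 3 ≤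
      4 * γ * (γ + 1) * (γ + 2) * δ := by
    rw [div_le_iff₀ (by positivity)]
    have hw3 : 24 * δ * (1 + w) ^ 2 ≤ 24 * δ * r ^ 3 := by
      gcongr
      exact (pow_le_pow_left₀ (by positivity) (by linarith) 2).trans
        (pow_le_pow_right₀ (by linarith) (by norm_num))
    linear_combination γ * (γ + 1) * (γ + 2) / 6 * ((neg_le.2 hcube).trans hw3)
  have hδ' : 0 ≤ (γ * (γ + 1) + K) * δ := by positivity
  have hr' : 0 ≤ (2 * γ + 4 * γ * (γ + 1) * (γ + 2)) / r ^ 2 := by positivity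
  linear_combination hfirst + hsecond + hthird + hδ' + hr'

theorem exists_torusLaplacian_shiftedSq_rpow_le (d : ℕ) {γ : ℝ} (hγ : 0 < γ) :
    ∃ C : ℝ, 0 ≤ C ∧ ∀ᶠ M in atTop, ∀ (L : ℕ) [NeZero L], 2 ≤ L → ∀ a : Fin d → ZMod L,
      torusLaplacian ((· ^ (-γ)) ∘ shiftedSq M) a ≤
        shiftedSq M a ^ (-γ) * (γ * (4 * γ + 4 - 2 * d) / shiftedSq M a -
          1 / shiftedSq M a ^ 2 + C * cycleGap L) := by
  obtain ⟨K, hK, hK'⟩ := exists_secondDiff_rpow_periodicSq_le hγ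
  refine ⟨d * K, by positivity, ?_⟩
  filter_upwards [eventually_ge_atTop 32,
    eventually_ge_atTop ((d * K + 1) / (4 * γ * (γ + 1)))] with M hM hMK L _ hL a
  rw [div_le_iff₀ (by positivity)] at hMK
  have hρ : 0 < shiftedSq M a := by linarith [le_shiftedSq M a]
  rw [torusLaplacian_comp_shiftedSq]
  set ρ := shiftedSq M a with hρdef
  calc _ ≤ ∑ i, ρ ^ (-γ) * (-(2 * γ) / ρ + (4 * γ * (γ + 1) * periodicSq (a i) + K) / ρ ^ 2 +
          K * cycleGap L) := by
        gcongr with i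
        exact hK' L hL (a i) ρ (by linarith [add_periodicSq_le_shiftedSq M a i])
    _ = ρ ^ (-γ) * (γ * (4 * γ + 4 - 2 * d) / ρ - (M * (4 * γ * (γ + 1)) - d * K) / ρ ^ 2 +
          d * K * cycleGap L) := by
        have hsum : ∑ i, periodicSq (a i) = ρ - M := by rw [hρdef, shiftedSq]; ring
        rw [← Finset.mul_sum]
        simp only [Finset.sum_add_distrib, ← Finset.sum_div, ← Finset.mul_sum, hsum,
          Finset.sum_const, Finset.card_univ, Fintype.card_fin, nsmul_eq_mul]
        field_simp
        ring
    _ ≤ _ := by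
        gcongr
        linarith

theorem exists_torusLaplacian_rpow_mul_expWeight_le (d : ℕ) (b : ℝ) :
    ∃ C : ℝ, 0 ≤ C ∧ ∀ M k : ℝ, 32 ≤ M → 0 ≤ k → k ≤ 1 / 8 → ∀ (L : ℕ) [NeZero L], 2 ≤ L →
      ∀ a : Fin d → ZMod L,
        torusLaplacian (((· ^ b) * expWeight k) ∘ shiftedSq M) a ≤
          expWeight k (shiftedSq M a) *
            (torusLaplacian ((· ^ b) ∘ shiftedSq M) a + C * k * shiftedSq M a ^ b) := by
  obtain ⟨K, hK, hK'⟩ := exists_secondDiff_rpow_mul_expWeight_le b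
  refine ⟨d * K, by positivity, fun M k hM hk hk' L _ hL a => ?_⟩
  simp only [torusLaplacian_comp_shiftedSq]
  calc _ ≤ ∑ i, expWeight k (shiftedSq M a) * (secondDiff (· ^ b) (shiftedSq M a)
          (periodicSq (a i + 1) - periodicSq (a i)) (periodicSq (a i - 1) - periodicSq (a i)) +
            K * k * shiftedSq M a ^ b) := by
        gcongr with i
        obtain ⟨hp, hq⟩ := periodicSq_increment_sq_le hL (a i)
          ((add_le_add_left hM _).trans (add_periodicSq_le_shiftedSq M a i))
        refine hK' k _ _ _ hk hk' (hM.trans (le_shiftedSq M a)) hp hq ?_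
        rw [periodicSq_add_one_add_sub_one hL]
        linarith [cycleGap_mul_periodicSq_le hL (a i)]
    _ = _ := by
        rw [← Finset.mul_sum, Finset.sum_add_distrib, Finset.sum_const, Finset.card_univ,
          Fintype.card_fin, nsmul_eq_mul]
        ring

end ShiftedSquare

section Barriers

open Filter

variable {d L : ℕ} [NeZero L]

theorem ite_le_comp_shiftedSq (g : ℝ → ℝ) {M : ℝ} {a : Fin d → ZMod L}
    (hg : 0 ≤ g (shiftedSq M a)) : (if a = 0 then g M else 0) ≤ g (shiftedSq M a) := by
  split_ifs with ha
  · rw [ha, shiftedSq_zero]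
  · exact hg

theorem shiftedSq_rpow_le (hd : 2 ≤ d) (hL : 2 ≤ L) {M : ℝ} (hM : 1 ≤ M) (a : Fin d → ZMod L) :
    shiftedSq M a ^ (-((d : ℝ) / 2 - 1)) ≤
      (6 * d : ℝ) ^ ((d : ℝ) / 2 - 1) * (((torusDist 0 a : ℝ) + 1) ^ (d - 2))⁻¹ := by
  have hd' : (2 : ℝ) ≤ d := by exact_mod_cast hd
  have hn : 0 < (torusDist 0 a : ℝ) + 1 := by positivity
  have hpow : (((torusDist 0 a : ℝ) + 1) ^ 2) ^ ((d : ℝ) / 2 - 1) =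
      ((torusDist 0 a : ℝ) + 1) ^ (d - 2) := by
    rw [← Real.rpow_natCast_mul hn.le, ← Real.rpow_natCast, Nat.cast_sub hd]
    congr 1
    push_cast
    ring
  calc shiftedSq M a ^ (-((d : ℝ) / 2 - 1))
      ≤ (((torusDist 0 a : ℝ) + 1) ^ 2 / (6 * d)) ^ (-((d : ℝ) / 2 - 1)) := by
        refine Real.rpow_le_rpow_of_nonpos (by positivity) ?_ (by linarith)
        rw [div_le_iff₀' (by positivity)]
        exact torusDist_add_one_sq_le (by omega) hL hM a
    _ = (6 * d : ℝ) ^ ((d : ℝ) / 2 - 1) * (((torusDist 0 a : ℝ) + 1) ^ (d - 2))⁻¹ := by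
        rw [Real.rpow_neg (by positivity), Real.div_rpow (by positivity) (by positivity), inv_div,
          hpow, div_eq_mul_inv]

theorem exists_torusLaplacian_critical_rpow_le (hd : 3 ≤ d) :
    ∃ C : ℝ, 0 ≤ C ∧ ∀ᶠ M in atTop, ∀ (L : ℕ) [NeZero L], 2 ≤ L → ∀ a : Fin d → ZMod L,
      torusLaplacian ((· ^ (-((d : ℝ) / 2 - 1))) ∘ shiftedSq M) a ≤
        shiftedSq M a ^ (-((d : ℝ) / 2 - 1)) * (C * cycleGap L - 1 / shiftedSq M a ^ 2) := by
  have hd' : (3 : ℝ) ≤ d := by exact_mod_cast hd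
  obtain ⟨C, hC, hev⟩ := exists_torusLaplacian_shiftedSq_rpow_le d
    (γ := (d : ℝ) / 2 - 1) (by linarith)
  refine ⟨C, hC, ?_⟩
  filter_upwards [hev] with M hM L _ hL a
  refine (hM L hL a).trans_eq ?_
  ring

/-- The barrier for masses `ε ≳ L⁻²`: the decay `|a|^{-(d-2)}` of the free Green function, damped
beyond the length `k^{-1/2}`, where `k` is proportional to `ε`. -/
noncomputable def massiveBarrier (M k : ℝ) (a : Fin d → ZMod L) : ℝ :=
  shiftedSq M a ^ (-((d : ℝ) / 2 - 1)) * expWeight k (shiftedSq M a)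

theorem exists_le_mul_massiveBarrier_sub_torusLaplacian (hd : 3 ≤ d) :
    ∃ C : ℝ, 0 ≤ C ∧ ∀ᶠ M in atTop, ∀ (L : ℕ) [NeZero L], 2 ≤ L → ∀ k ε : ℝ, 0 ≤ k → k ≤ 1 / 8 →
      C * (k + cycleGap L) ≤ ε → ∀ a : Fin d → ZMod L,
        massiveBarrier M k a / shiftedSq M a ^ 2 ≤
          ε * massiveBarrier M k a - torusLaplacian (massiveBarrier M k) a := by
  obtain ⟨C₁, hC₁, hpow⟩ := exists_torusLaplacian_critical_rpow_le hd
  obtain ⟨C₂, hC₂, hexp⟩ := exists_torusLaplacian_rpow_mul_expWeight_le d (-((d : ℝ) / 2 - 1))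
  refine ⟨C₁ + C₂, by positivity, ?_⟩
  filter_upwards [hpow, eventually_ge_atTop 32] with M hpowM hM L _ hL k ε hk hk' hε a
  have hρ : 0 < shiftedSq M a := by linarith [le_shiftedSq M a]
  have hpow_a := hpowM L hL a
  have hexp_a : torusLaplacian (massiveBarrier M k) a ≤ _ := hexp M k hM hk hk' L hL a
  rw [massiveBarrier, ← sub_nonneg]
  set ρ := shiftedSq M a
  set P := ρ ^ (-((d : ℝ) / 2 - 1))
  have hE := (expWeight_pos k ρ).le
  have hδ := cycleGap_nonneg L
  have hslack : C₁ * cycleGap L + C₂ * k ≤ ε := by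
    linarith [mul_nonneg hC₁ hk, mul_nonneg hC₂ hδ]
  linear_combination hexp_a + expWeight k ρ * hpow_a + P * expWeight k ρ * hslack

theorem exists_isGreenBarrier_massiveBarrier (hd : 3 ≤ d) :
    ∃ K c M η : ℝ, 0 ≤ K ∧ 0 < c ∧ 1 ≤ M ∧ 0 < η ∧ ∀ (L : ℕ) [NeZero L], 2 ≤ L →
      ∀ ε : ℝ, K * cycleGap L ≤ ε → ε ≤ 1 →
        IsGreenBarrier ε η (massiveBarrier M (c * ε) : (Fin d → ZMod L) → ℝ) := by
  obtain ⟨C, hC, hev⟩ := exists_le_mul_massiveBarrier_sub_torusLaplacian hd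
  obtain ⟨M, hM, hM1⟩ := (hev.and (eventually_ge_atTop 1)).exists
  have hρ {L : ℕ} [NeZero L] (a : Fin d → ZMod L) : 0 < shiftedSq M a := by
    linarith [le_shiftedSq M a]
  refine ⟨2 * C, 1 / (8 * (C + 1)), M, M ^ (-((d : ℝ) / 2 - 1)) * expWeight 1 M / M ^ 2,
    by positivity, by positivity, hM1,
    div_pos (mul_pos (by positivity) (expWeight_pos 1 M)) (by positivity),
    fun L _ hL ε hε hε1 => ⟨fun a => ?_, fun a => ?_⟩⟩
  · exact mul_nonneg (Real.rpow_nonneg (hρ a).le _) (expWeight_pos _ _).le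
  have hε0 : 0 ≤ ε := (mul_nonneg (by positivity) (cycleGap_nonneg L)).trans hε
  obtain ⟨k, hk⟩ : ∃ k, k = 1 / (8 * (C + 1)) * ε := ⟨_, rfl⟩
  have hk0 : 0 ≤ k := hk ▸ by positivity
  have hkC : 8 * (C * k) + 8 * k = ε := by rw [hk]; field_simp
  have hCk : 0 ≤ C * k := mul_nonneg hC hk0
  rw [← hk]
  refine le_trans ?_ (hM L hL k ε hk0 (by linarith) (by linarith) a)
  calc (if a = 0 then M ^ (-((d : ℝ) / 2 - 1)) * expWeight 1 M / M ^ 2 else 0)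
      ≤ shiftedSq M a ^ (-((d : ℝ) / 2 - 1)) * expWeight 1 (shiftedSq M a) /
          shiftedSq M a ^ 2 :=
        ite_le_comp_shiftedSq (fun r => r ^ (-((d : ℝ) / 2 - 1)) * expWeight 1 r / r ^ 2)
          (div_nonneg (mul_nonneg (Real.rpow_nonneg (hρ a).le _) (expWeight_pos _ _).le)
            (sq_nonneg _))
    _ ≤ massiveBarrier M k a / shiftedSq M a ^ 2 := by
        have := hρ a
        unfold massiveBarrier expWeight
        gcongr
        linarith

theorem massiveBarrier_le (hd : 2 ≤ d) (hL : 2 ≤ L) {M : ℝ} (hM : 1 ≤ M) {c ε : ℝ} (hc : 0 ≤ c)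
    (hε : 0 ≤ ε) (a : Fin d → ZMod L) :
    massiveBarrier M (c * ε) a ≤
      (6 * d : ℝ) ^ ((d : ℝ) / 2 - 1) * (((torusDist 0 a : ℝ) + 1) ^ (d - 2))⁻¹ *
        Real.exp (-√(c / (6 * d)) * torusDist 0 a * √ε) := by
  unfold massiveBarrier
  gcongr
  · exact (expWeight_pos _ _).le
  · exact shiftedSq_rpow_le hd hL hM a
  refine expWeight_le_exp_neg_sqrt.trans ?_
  rw [neg_mul, neg_mul]
  gcongr
  refine Real.le_sqrt_of_sq_le ?_
  rw [mul_pow, mul_pow, Real.sq_sqrt (by positivity), Real.sq_sqrt hε]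
  have hdist : (torusDist 0 a : ℝ) ^ 2 ≤ 6 * d * shiftedSq M a :=
    (pow_le_pow_left₀ (by positivity) (by linarith) 2).trans
      (torusDist_add_one_sq_le (by omega) hL hM a)
  calc c / (6 * d) * (torusDist 0 a : ℝ) ^ 2 * ε
      ≤ c / (6 * d) * (6 * d * shiftedSq M a) * ε := by gcongr
    _ = c * ε * shiftedSq M a := by field_simp

end Barriers

section MasslessBarrier

open Filter

variable {d L : ℕ} [NeZero L]

theorem exists_le_rpow_neg_add_rpow {α β γ : ℝ} (hα : 0 ≤ α) (hβ : 0 < β) (hγ : 0 < γ) (C : ℝ) :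
    ∃ D : ℝ, 0 ≤ D ∧ ∀ z : ℝ, 0 < z → C ≤ γ * z ^ (-β) + D * z ^ α := by
  have htop := (tendsto_rpow_neg_nhdsGT_zero (neg_lt_zero.2 hβ)).const_mul_atTop hγ
  obtain ⟨z₀, hz₀, hsmall⟩ := mem_nhdsGT_iff_exists_Ioc_subset.1 (htop.eventually_ge_atTop C)
  rw [Set.mem_Ioi] at hz₀
  refine ⟨|C| / z₀ ^ α, by positivity, fun z hz => ?_⟩
  rcases le_total z z₀ with hzz₀ | hzz₀
  · exact le_add_of_le_of_nonneg (hsmall ⟨hz, hzz₀⟩) (by positivity)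
  · refine le_add_of_nonneg_of_le (by positivity) ((le_abs_self C).trans ?_)
    rw [div_mul_eq_mul_div, le_div_iff₀ (by positivity)]
    gcongr

theorem rpow_mul_rpow_sub {δ ρ : ℝ} (hδ : 0 ≤ δ) (hρ : 0 < ρ) (s α : ℝ) :
    δ ^ s * ρ ^ (s - α) = ρ ^ (-α) * (δ * ρ) ^ s := by
  rw [Real.mul_rpow hδ hρ.le, sub_eq_add_neg, Real.rpow_add hρ]
  ring

/-- The barrier for masses `ε ≲ L⁻²`: the free decay `|a|^{-(d-2)}`, a correction whose Laplacian
absorbs the discrepancy between the torus and `ℤ^d`, and a constant of size `1/(L^d ε)` carrying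
the zero mode. -/
noncomputable def masslessBarrier (M D ε : ℝ) : (Fin d → ZMod L) → ℝ :=
  (· ^ (-((d : ℝ) / 2 - 1))) ∘ shiftedSq M +
    cycleGap L ^ (1 / 4 : ℝ) • ((· ^ (-((d : ℝ) / 2 - 5 / 4))) ∘ shiftedSq M) +
    fun _ => D * cycleGap L ^ ((d : ℝ) / 2) / ε

theorem torusLaplacian_masslessBarrier (M D ε : ℝ) (a : Fin d → ZMod L) :
    torusLaplacian (masslessBarrier M D ε) a =
      torusLaplacian ((· ^ (-((d : ℝ) / 2 - 1))) ∘ shiftedSq M) a + cycleGap L ^ (1 / 4 : ℝ) *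
        torusLaplacian ((· ^ (-((d : ℝ) / 2 - 5 / 4))) ∘ shiftedSq M) a := by
  rw [masslessBarrier, torusLaplacian_add, torusLaplacian_add, torusLaplacian_const_smul,
    torusLaplacian_const, add_zero]

theorem masslessBarrier_eq {M : ℝ} (hM : 0 < M) (D ε : ℝ) (a : Fin d → ZMod L) :
    masslessBarrier M D ε a =
      shiftedSq M a ^ (-((d : ℝ) / 2 - 1)) * (1 + (cycleGap L * shiftedSq M a) ^ (1 / 4 : ℝ)) +
        D * cycleGap L ^ ((d : ℝ) / 2) / ε := by
  have hexp : -((d : ℝ) / 2 - 5 / 4) = 1 / 4 - (d / 2 - 1) := by ring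
  rw [mul_one_add, ← rpow_mul_rpow_sub (cycleGap_nonneg L) (hM.trans_le (le_shiftedSq M a)), ← hexp]
  rfl

theorem exists_torusLaplacian_subcritical_rpow_le (hd : 3 ≤ d) :
    ∃ C : ℝ, 0 ≤ C ∧ ∀ᶠ M in atTop, ∀ (L : ℕ) [NeZero L], 2 ≤ L → ∀ a : Fin d → ZMod L,
      cycleGap L ^ (1 / 4 : ℝ) *
          torusLaplacian ((· ^ (-((d : ℝ) / 2 - 5 / 4))) ∘ shiftedSq M) a ≤
        cycleGap L * shiftedSq M a ^ (-((d : ℝ) / 2 - 1)) *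
          (C * (cycleGap L * shiftedSq M a) ^ (1 / 4 : ℝ) -
            ((d : ℝ) / 2 - 5 / 4) * (cycleGap L * shiftedSq M a) ^ (-(3 / 4) : ℝ)) := by
  have hd' : (3 : ℝ) ≤ d := by exact_mod_cast hd
  obtain ⟨C, hC, hev⟩ := exists_torusLaplacian_shiftedSq_rpow_le d
    (γ := (d : ℝ) / 2 - 5 / 4) (by linarith)
  refine ⟨C, hC, ?_⟩
  filter_upwards [hev, eventually_gt_atTop 0] with M hM hM0 L _ hL a
  have hδ := cycleGap_pos hL
  have hρ : 0 < shiftedSq M a := hM0.trans_le (le_shiftedSq M a)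
  have hlap := hM L hL a
  set δ := cycleGap L
  set ρ := shiftedSq M a
  have hz34 : (δ * ρ) ^ (-(3 / 4) : ℝ) = (δ * ρ) ^ (1 / 4 : ℝ) / (δ * ρ) := by
    rw [← Real.rpow_sub_one (by positivity)]
    norm_num
  have hexp : -((d : ℝ) / 2 - 5 / 4) = 1 / 4 - (d / 2 - 1) := by ring
  calc _ ≤ δ ^ (1 / 4 : ℝ) * (ρ ^ (-((d : ℝ) / 2 - 5 / 4)) *
          (((d : ℝ) / 2 - 5 / 4) * (4 * ((d : ℝ) / 2 - 5 / 4) + 4 - 2 * d) / ρ -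
            1 / ρ ^ 2 + C * δ)) := by gcongr
    _ ≤ δ ^ (1 / 4 : ℝ) * (ρ ^ (-((d : ℝ) / 2 - 5 / 4)) *
          (((d : ℝ) / 2 - 5 / 4) * (4 * ((d : ℝ) / 2 - 5 / 4) + 4 - 2 * d) / ρ + C * δ)) := by
        gcongr
        exact sub_le_self _ (by positivity)
    _ = _ := by
        rw [← mul_assoc (δ ^ (1 / 4 : ℝ)), hexp, rpow_mul_rpow_sub hδ.le hρ, hz34]
        field_simp
        ring

theorem exists_torusLaplacian_masslessBarrier_le (hd : 3 ≤ d) :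
    ∃ M D : ℝ, 1 ≤ M ∧ 0 ≤ D ∧ ∀ (L : ℕ) [NeZero L], 2 ≤ L → ∀ (ε : ℝ) (a : Fin d → ZMod L),
      torusLaplacian (masslessBarrier M D ε) a ≤
        D * cycleGap L ^ ((d : ℝ) / 2) -
          shiftedSq M a ^ (-((d : ℝ) / 2 - 1)) / shiftedSq M a ^ 2 := by
  have hd' : (3 : ℝ) ≤ d := by exact_mod_cast hd
  obtain ⟨C₁, -, hev₁⟩ := exists_torusLaplacian_critical_rpow_le hd
  obtain ⟨C₂, hC₂, hev₂⟩ := exists_torusLaplacian_subcritical_rpow_le hd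
  obtain ⟨M, ⟨hM₁, hM₂⟩, hM⟩ := ((hev₁.and hev₂).and (eventually_ge_atTop 1)).exists
  obtain ⟨D, hD, hscalar⟩ := exists_le_rpow_neg_add_rpow (α := (d : ℝ) / 2 - 1) (β := 3 / 4)
    (γ := (d : ℝ) / 2 - 5 / 4) (by linarith) (by norm_num) (by linarith)
    (C₁ + C₂ * (2 * M + 2 * d) ^ (1 / 4 : ℝ))
  refine ⟨M, D, hM, hD, fun L _ hL ε a => ?_⟩
  have hδ := cycleGap_pos hL
  have hρ : 0 < shiftedSq M a := by linarith [le_shiftedSq M a]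
  have hcritical := hM₁ L hL a
  have hsubcritical := hM₂ L hL a
  have hzD := hscalar (cycleGap L * shiftedSq M a) (by positivity)
  have hz : (cycleGap L * shiftedSq M a) ^ (1 / 4 : ℝ) ≤ (2 * M + 2 * d) ^ (1 / 4 : ℝ) :=
    Real.rpow_le_rpow (by positivity) (cycleGap_mul_shiftedSq_le hL (by linarith) a) (by norm_num)
  have hδd : cycleGap L ^ ((d : ℝ) / 2) = cycleGap L *
      (shiftedSq M a ^ (-((d : ℝ) / 2 - 1)) *
        (cycleGap L * shiftedSq M a) ^ ((d : ℝ) / 2 - 1)) := by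
    rw [← rpow_mul_rpow_sub hδ.le hρ, sub_self, Real.rpow_zero, mul_one,
      Real.rpow_sub_one hδ.ne']
    field_simp
  rw [torusLaplacian_masslessBarrier, hδd]
  linear_combination hcritical + hsubcritical +
    cycleGap L * shiftedSq M a ^ (-((d : ℝ) / 2 - 1)) * (hzD + C₂ * hz)

theorem exists_isGreenBarrier_masslessBarrier (hd : 3 ≤ d) :
    ∃ M D η : ℝ, 1 ≤ M ∧ 0 ≤ D ∧ 0 < η ∧ ∀ (L : ℕ) [NeZero L], 2 ≤ L → ∀ ε : ℝ, 0 < ε →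
      IsGreenBarrier ε η (masslessBarrier M D ε : (Fin d → ZMod L) → ℝ) := by
  obtain ⟨M, D, hM, hD, hlap⟩ := exists_torusLaplacian_masslessBarrier_le hd
  have hM0 : 0 < M := by linarith
  refine ⟨M, D, M ^ (-((d : ℝ) / 2 - 1)) / M ^ 2, hM, hD, by positivity, fun L _ hL ε hε => ?_⟩
  have hδ := cycleGap_nonneg L
  have hρ (a : Fin d → ZMod L) : 0 < shiftedSq M a := hM0.trans_le (le_shiftedSq M a)
  refine ⟨fun a => ?_, fun a => ?_⟩ <;> have := hρ a
  · rw [masslessBarrier_eq hM0]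
    positivity
  have hconst : D * cycleGap L ^ ((d : ℝ) / 2) ≤ ε * masslessBarrier M D ε a := by
    rw [masslessBarrier_eq hM0, mul_add, mul_div_cancel₀ _ hε.ne']
    exact le_add_of_nonneg_left (by positivity)
  have hsource := ite_le_comp_shiftedSq (fun r => r ^ (-((d : ℝ) / 2 - 1)) / r ^ 2)
    (M := M) (a := a) (by positivity)
  linarith [hlap L hL ε a]

theorem cycleGap_rpow_le (d : ℕ) (L : ℕ) :
    cycleGap L ^ ((d : ℝ) / 2) ≤ 20 ^ ((d : ℝ) / 2) * ((L : ℝ) ^ d)⁻¹ := by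
  calc cycleGap L ^ ((d : ℝ) / 2) ≤ (20 / (L : ℝ) ^ 2) ^ ((d : ℝ) / 2) :=
        Real.rpow_le_rpow (cycleGap_nonneg L) (cycleGap_le_div_sq L) (by positivity)
    _ = 20 ^ ((d : ℝ) / 2) * ((L : ℝ) ^ d)⁻¹ := by
        rw [Real.div_rpow (by norm_num) (by positivity), ← Real.rpow_natCast_mul (by positivity),
          Nat.cast_ofNat, mul_div_cancel₀ _ two_ne_zero, Real.rpow_natCast, div_eq_mul_inv]

theorem masslessBarrier_le (hd : 2 ≤ d) (hL : 2 ≤ L) {M D ε : ℝ} (hM : 1 ≤ M) (hD : 0 ≤ D)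
    (hε : 0 < ε) (a : Fin d → ZMod L) :
    masslessBarrier M D ε a ≤
      (6 * d : ℝ) ^ ((d : ℝ) / 2 - 1) * (1 + (2 * M + 2 * d) ^ (1 / 4 : ℝ)) *
          (((torusDist 0 a : ℝ) + 1) ^ (d - 2))⁻¹ +
        D * 20 ^ ((d : ℝ) / 2) * ((L : ℝ) ^ d * ε)⁻¹ := by
  have hρ : 0 < shiftedSq M a := by linarith [le_shiftedSq M a]
  have hδ := cycleGap_nonneg L
  rw [masslessBarrier_eq (by linarith)]
  calc _ ≤ (6 * d : ℝ) ^ ((d : ℝ) / 2 - 1) * (((torusDist 0 a : ℝ) + 1) ^ (d - 2))⁻¹ *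
          (1 + (2 * M + 2 * d) ^ (1 / 4 : ℝ)) +
        D * (20 ^ ((d : ℝ) / 2) * ((L : ℝ) ^ d)⁻¹) / ε := by
        gcongr
        · exact shiftedSq_rpow_le hd hL hM a
        · exact cycleGap_mul_shiftedSq_le hL (by linarith) a
        · exact cycleGap_rpow_le d L
    _ = _ := by
        rw [mul_inv]
        ring

end MasslessBarrier

section Decay

open Real

variable {L : ℕ} [NeZero L]

theorem Bparam_nonneg (L d : ℕ) {t n : ℝ} (ht : t ≤ 1) (hn : 0 ≤ n) : 0 ≤ Bparam d L t n := by
  have := sub_nonneg.2 ht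
  unfold Bparam
  positivity

theorem torusDist_mul_sqrt_le {d : ℕ} {K ε : ℝ} (hK : 0 ≤ K) (hε : ε ≤ K * cycleGap L)
    (a : Fin d → ZMod L) : torusDist 0 a * √ε ≤ d * √(20 * K) := by
  have hL : (0 : ℝ) < L := by exact_mod_cast NeZero.pos L
  calc torusDist 0 a * √ε ≤ d * L * √(20 * K / (L : ℝ) ^ 2) := by
        gcongr
        · exact torusDist_zero_le a
        · calc ε ≤ K * (20 / (L : ℝ) ^ 2) := hε.trans (by gcongr; exact cycleGap_le_div_sq L)
            _ = 20 * K / (L : ℝ) ^ 2 := by ring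
    _ = d * √(20 * K) := by
        rw [sqrt_div (by positivity), sqrt_sq hL.le]
        field_simp

theorem masslessBarrier_le_Bparam {d : ℕ} (hd : 2 ≤ d) {M D : ℝ} (hM : 1 ≤ M) (hD : 0 ≤ D)
    {K c : ℝ} (hK : 0 ≤ K) (hc : 0 ≤ c) :
    ∃ C : ℝ, 0 ≤ C ∧ ∀ (L : ℕ) [NeZero L], 2 ≤ L → ∀ s : ℝ, s < 1 → 1 - s ≤ K * cycleGap L →
      ∀ a : Fin d → ZMod L, masslessBarrier M D (1 - s) a ≤
        C * Bparam d L s (torusDist 0 a) * exp (-c * torusDist 0 a * √(1 - s)) := by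
  obtain ⟨A, hA⟩ : ∃ A, A =
    (6 * d : ℝ) ^ ((d : ℝ) / 2 - 1) * (1 + (2 * M + 2 * d) ^ (1 / 4 : ℝ)) := ⟨_, rfl⟩
  have hA0 : 0 ≤ A := hA ▸ by positivity
  refine ⟨(A + D * 20 ^ ((d : ℝ) / 2)) * exp (c * (d * √(20 * K))), by positivity,
    fun L _ hL s hs hsK a => ?_⟩
  have hε : 0 < 1 - s := sub_pos.2 hs
  have hexp : 1 ≤ exp (c * (d * √(20 * K))) * exp (-c * torusDist 0 a * √(1 - s)) := by
    rw [← exp_add, one_le_exp_iff]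
    linear_combination c * torusDist_mul_sqrt_le hK hsK a
  have hB := Bparam_nonneg L d hs.le (Nat.cast_nonneg (torusDist 0 a))
  calc masslessBarrier M D (1 - s) a
      ≤ A * (((torusDist 0 a : ℝ) + 1) ^ (d - 2))⁻¹ +
          D * 20 ^ ((d : ℝ) / 2) * ((L : ℝ) ^ d * (1 - s))⁻¹ :=
        hA ▸ masslessBarrier_le hd hL hM hD hε a
    _ ≤ A * Bparam d L s (torusDist 0 a) +
          D * 20 ^ ((d : ℝ) / 2) * Bparam d L s (torusDist 0 a) := by
        unfold Bparam
        gcongr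
        · exact le_add_of_nonneg_right (by positivity)
        · exact le_add_of_nonneg_left (by positivity)
    _ = (A + D * 20 ^ ((d : ℝ) / 2)) * Bparam d L s (torusDist 0 a) * 1 := by ring
    _ ≤ (A + D * 20 ^ ((d : ℝ) / 2)) * Bparam d L s (torusDist 0 a) *
          (exp (c * (d * √(20 * K))) * exp (-c * torusDist 0 a * √(1 - s))) := by gcongr
    _ = _ := by ring

theorem exists_isGreenBarrier_le_Bparam {d : ℕ} (hd : 3 ≤ d) :
    ∃ c η C : ℝ, 0 < c ∧ 0 < η ∧ 0 < C ∧ ∀ (L : ℕ) [NeZero L], 2 ≤ L → ∀ s : ℝ, 0 ≤ s → s < 1 →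
      ∃ f : (Fin d → ZMod L) → ℝ, IsGreenBarrier (1 - s) η f ∧ ∀ a,
        f a ≤ C * Bparam d L s (torusDist 0 a) * exp (-c * torusDist 0 a * √(1 - s)) := by
  obtain ⟨K, c, M₁, η₁, hK, hc, hM₁, hη₁, hmassive⟩ := exists_isGreenBarrier_massiveBarrier hd
  obtain ⟨M₂, D, η₂, hM₂, hD, hη₂, hmassless⟩ := exists_isGreenBarrier_masslessBarrier hd
  obtain ⟨A, hA, hmassless_le⟩ := masslessBarrier_le_Bparam (d := d) (by omega) hM₂ hD hK
    (sqrt_nonneg (c / (6 * d)))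
  refine ⟨√(c / (6 * d)), min η₁ η₂, (6 * d : ℝ) ^ ((d : ℝ) / 2 - 1) + A, by positivity,
    lt_min hη₁ hη₂, by positivity, fun L _ hL s hs hs1 => ?_⟩
  have hε : 0 < 1 - s := sub_pos.2 hs1
  have hB (a : Fin d → ZMod L) := Bparam_nonneg L d hs1.le (Nat.cast_nonneg (torusDist 0 a))
  rcases le_total (K * cycleGap L) (1 - s) with hcase | hcase
  · refine ⟨_, (hmassive L hL _ hcase (by linarith)).mono (min_le_left _ _), fun a => ?_⟩
    refine (massiveBarrier_le (by omega) hL hM₁ hc.le hε.le a).trans ?_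
    have := hB a
    gcongr
    · exact le_add_of_nonneg_right hA
    · exact le_add_of_nonneg_right (by positivity)
  · refine ⟨_, (hmassless L hL _ hε).mono (min_le_right _ _), fun a => ?_⟩
    refine (hmassless_le L hL s hs1 hcase a).trans ?_
    have := hB a
    gcongr
    exact le_add_of_nonneg_left (by positivity)

theorem Bparam_le_two_mul {s t : ℝ} (ht : t < 1) (hst : 1 - t ≤ 2 * (1 - s)) (d : ℕ) {n : ℝ}
    (hn : 0 ≤ n) : Bparam d L s n ≤ 2 * Bparam d L t n := by
  have hL : (0 : ℝ) < L := by exact_mod_cast NeZero.pos L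
  have ht' : 0 < 1 - t := sub_pos.2 ht
  have hzero : ((L : ℝ) ^ d * (1 - s))⁻¹ ≤ 2 * ((L : ℝ) ^ d * (1 - t))⁻¹ :=
    calc ((L : ℝ) ^ d * (1 - s))⁻¹ ≤ ((L : ℝ) ^ d * ((1 - t) / 2))⁻¹ := by
          gcongr
          linarith
      _ = 2 * ((L : ℝ) ^ d * (1 - t))⁻¹ := by field_simp
  have hfree : 0 ≤ ((n + 1) ^ (d - 2))⁻¹ := by positivity
  unfold Bparam
  linarith

theorem inv_ellT_le {t : ℝ} (ht : t < 1) : (ellT L t)⁻¹ ≤ √(1 - t) + (L : ℝ)⁻¹ := by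
  have hL : (0 : ℝ) < L := by exact_mod_cast NeZero.pos L
  rcases min_choice ((1 - t) ^ (-(1 / 2 : ℝ))) (L : ℝ) with h | h <;> rw [ellT, h]
  · rw [rpow_neg (sub_nonneg.2 ht.le), ← sqrt_eq_rpow, inv_inv]
    exact le_add_of_nonneg_right (by positivity)
  · exact le_add_of_nonneg_left (sqrt_nonneg _)

theorem exp_neg_mul_torusDist_mul_sqrt_le {d : ℕ} {c s t : ℝ} (hc : 0 ≤ c) (ht : t < 1)
    (hst : 1 - t ≤ 4 * (1 - s)) (a : Fin d → ZMod L) :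
    exp (-c * torusDist 0 a * √(1 - s)) ≤
      exp (c / 2 * d) * exp (-(c / 2) * torusDist 0 a / ellT L t) := by
  have hL : (0 : ℝ) < L := by exact_mod_cast NeZero.pos L
  have hsqrt : √(1 - t) ≤ 2 * √(1 - s) := by
    refine sqrt_le_iff.2 ⟨by positivity, ?_⟩
    rw [mul_pow, sq_sqrt (by linarith)]
    linarith
  have hscale : torusDist 0 a * (ellT L t)⁻¹ ≤ torusDist 0 a * (2 * √(1 - s)) + d := by
    calc torusDist 0 a * (ellT L t)⁻¹
        ≤ torusDist 0 a * (2 * √(1 - s)) + torusDist 0 a * (L : ℝ)⁻¹ := by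
          rw [← mul_add]
          gcongr
          exact (inv_ellT_le ht).trans (by gcongr)
      _ ≤ torusDist 0 a * (2 * √(1 - s)) + d := by
          gcongr
          rw [mul_inv_le_iff₀ hL]
          exact torusDist_zero_le a
  rw [← exp_add, exp_le_exp, div_eq_mul_inv]
  linear_combination c / 2 * hscale

theorem propagator_exponential_decay_general (d : ℕ) (hd : 3 ≤ d) {lam₀ : ℝ} (hlam₀ : 0 < lam₀) :
    ∃ c : ℝ, 0 < c ∧ ∃ C : ℝ, 0 < C ∧
      ∀ (L : ℕ) [NeZero L], 2 ≤ L →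
        ∀ lam : ℝ, lam₀ ≤ |lam| →
          ∀ t : ℝ, t < 1 →
            ∀ ξ : ℂ, ‖ξ‖ ≤ t →
              ∀ a : Fin d → ZMod L,
                ‖ThetaB d L lam ξ 0 a‖ ≤
                  C * Bparam d L t (torusDist 0 a) *
                    exp (-c * (torusDist 0 a : ℝ) / ellT L t) := by
  obtain ⟨c, η, C, hc, hη, hC, hbarrier⟩ := exists_isGreenBarrier_le_Bparam hd
  have hμ₀ : 0 < hoppingRate d lam₀ := hoppingRate_pos d hlam₀.ne'
  refine ⟨c / 2, by positivity,
    (η * (1 / 2 * hoppingRate d lam₀))⁻¹ * (C * 2 * exp (c / 2 * d)), by positivity,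
    fun L _ hL lam hlam t ht ξ hξ a => ?_⟩
  have ht0 : 0 ≤ t := (norm_nonneg ξ).trans hξ
  obtain ⟨f, hf, hfle⟩ := hbarrier L hL ((1 + t) / 2) (by linarith) (by linarith)
  calc ‖ThetaB d L lam ξ 0 a‖
      ≤ (η * ((1 + t) / 2 * hoppingRate d lam))⁻¹ * f a :=
        hf.norm_ThetaB_le hη (by omega) (abs_pos.1 (hlam₀.trans_le hlam)) (by linarith)
          (by linarith) (by linarith) a
    _ ≤ (η * (1 / 2 * hoppingRate d lam₀))⁻¹ * (C * (2 * Bparam d L t (torusDist 0 a)) *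
          (exp (c / 2 * d) * exp (-(c / 2) * torusDist 0 a / ellT L t))) := by
        gcongr
        · exact hf.nonneg a
        · linarith
        · exact hoppingRate_mono d ((abs_of_pos hlam₀).trans_le hlam)
        refine (hfle a).trans ?_
        gcongr
        · have := Bparam_nonneg L d ht.le (Nat.cast_nonneg (torusDist 0 a))
          positivity
        · exact Bparam_le_two_mul ht (by linarith) d (Nat.cast_nonneg _)
        · exact exp_neg_mul_torusDist_mul_sqrt_le hc.le ht (by linarith) a
    _ = _ := by ring

end Decay

/-- **Exponential decay of the propagator (Lemma 2.19, part 5, first bound).**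
There are constants `c_d, C_d > 0`, depending only on `d` and `C₀`, such that for every
`L ≥ 2`, `t ∈ [0,1)`, unimodular `m ∈ ℂ`, `ξ ∈ {t, t·m², t·conj(m)²}` and `a ∈ ℤ_L^d`,
`|Θ^(B)_ξ(0,a)| ≤ C_d · B_{t,|a|} · exp(−c_d·|a|/ℓ_t)`. -/
theorem propagator_exponential_decay (d : ℕ) (hd : 3 ≤ d) (C₀ : ℝ) (hC₀ : 1 ≤ C₀) :
    ∃ c : ℝ, 0 < c ∧ ∃ C : ℝ, 0 < C ∧
      ∀ (L : ℕ) [NeZero L], 2 ≤ L →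
        ∀ lam : ℝ, C₀⁻¹ ≤ lam → lam ≤ C₀ →
          ∀ t : ℝ, 0 ≤ t → t < 1 →
            ∀ m : ℂ, ‖m‖ = 1 →
              ∀ ξ ∈ ({(t : ℂ), (t : ℂ) * m ^ 2, (t : ℂ) * (starRingEnd ℂ) m ^ 2} : Set ℂ),
                ∀ a : Fin d → ZMod L,
                  ‖ThetaB d L lam ξ 0 a‖ ≤
                    C * Bparam d L t (torusDist 0 a) *
                      Real.exp (-c * (torusDist 0 a : ℝ) / ellT L t) := by
  have hC₀' : 0 < C₀⁻¹ := inv_pos.2 (by linarith)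
  obtain ⟨c, hc, C, hC, hbound⟩ := propagator_exponential_decay_general d hd hC₀'
  refine ⟨c, hc, C, hC, fun L _ hL lam hlam _ t ht0 ht1 m hm ξ hξ a => ?_⟩
  have hnorm : ‖ξ‖ = t := by
    rcases hξ with rfl | rfl | rfl <;> simp [hm, abs_of_nonneg ht0]
  exact hbound L hL lam (hlam.trans (le_abs_self lam)) t ht1 ξ hnorm.le a
end

section
/- Propagator without zero mode (Lemma 2.19, part 8): Define the zero-mode-removed propagator Θ̊^(B)_t(a,b) := Θ^(B)_t(a,b) − L^{-2d}·Σ_{a',b'∈ℤ_L^d} Θ^(B)_t(a',b'). For any constant τ > 0, there exists a constant C > 0, depending only on d, C₀ and τ, such that for every integer L ≥ 2, every t ∈ [0,1), and every a ∈ ℤ_L^d: |Θ̊^(B)_t(0,a)| ≤ C · L^τ · (|a|+1)^{-(d−2)}. -/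
/-!
Up to a scalar factor in `(0, 1]`, the matrix `S^(B)` is the transition matrix `P` of a lazy random
walk on the torus. Its holding probability and its step probabilities are bounded below, so its
Fourier symbol `σ` satisfies `|σ p| ≤ 1 - 8c|p|² / L²` with `c > 0` depending only on `d` and `C₀`.

Summing `|σ|^k` over momenta gives the on-diagonal bound `P^k ≤ C (k+1)^{-d/2}` for `k ≤ L²`.
Since the functions `x ↦ cosh (θ x_i)` satisfy `P w ≤ cosh θ · w`, splitting a path of length `k`
in half upgrades this to `P^k(a, b) ≤ C (√(k+1) + |a - b| + 1)^{-d}`, and the sum of this over `k`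
is of order `(|a - b| + 1)^{-(d-2)}`.

Subtracting the average of the resolvent annihilates its zero mode. In what remains, the first `L²`
terms of the Neumann series contribute the sum above, up to a zero mode of size `L² / L^d`; at
nonzero momenta the spectral gap `8c / L²` bounds the tail by `L² · L^{-d} ∑ |σ|^{L²} ≤ C L^{2-d}`.
Both are at most of order `(|a - b| + 1)^{-(d-2)}` because `|a - b|` is at most of order `L`.
-/

/-- The discrete torus `ℤ_L^d`. -/
abbrev Torus (d L : ℕ) : Type := Fin d → ZMod L

section Residues

variable {L : ℕ}

lemma abs_valMinAbs_sub_le_add (x y z : ZMod L) :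
    |((x - y).valMinAbs : ℝ)| ≤ |((z - x).valMinAbs : ℝ)| + |((z - y).valMinAbs : ℝ)| := by
  have h := ZMod.natAbs_valMinAbs_add_le (x - z) (z - y)
  rw [sub_add_sub_cancel] at h
  replace h := h.trans (Int.natAbs_add_le _ _)
  rw [← neg_sub z x, ZMod.natAbs_valMinAbs_neg] at h
  simp_rw [← Int.cast_abs, ← Nat.cast_natAbs]
  exact_mod_cast h

variable [NeZero L]

lemma natAbs_valMinAbs_eq_min_val_neg_val (z : ZMod L) :
    z.valMinAbs.natAbs = min z.val (-z).val := by
  rw [ZMod.valMinAbs_natAbs_eq_min, ZMod.neg_val]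
  split_ifs with hz <;> simp [hz]

lemma abs_valMinAbs_intCast_le (j : ℤ) : |((j : ZMod L).valMinAbs : ℝ)| ≤ |(j : ℝ)| := by
  have h := ZMod.natAbs_min_of_le_div_two L _ j (ZMod.coe_valMinAbs (j : ZMod L))
    (ZMod.natAbs_valMinAbs_le _)
  rw [← Int.cast_abs, ← Int.cast_abs, ← Nat.cast_natAbs, ← Nat.cast_natAbs]
  exact_mod_cast h

lemma cosh_valMinAbs_add_one_add_sub_one_le (θ : ℝ) (z : ZMod L) :
    Real.cosh (θ * (z + 1).valMinAbs) + Real.cosh (θ * (z - 1).valMinAbs) ≤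
      2 * Real.cosh θ * Real.cosh (θ * z.valMinAbs) := by
  have cosh_le (j : ℤ) : Real.cosh (θ * (j : ZMod L).valMinAbs) ≤ Real.cosh (θ * j) := by
    rw [Real.cosh_le_cosh, abs_mul, abs_mul]
    exact mul_le_mul_of_nonneg_left (abs_valMinAbs_intCast_le j) (abs_nonneg θ)
  have h_add := cosh_le (z.valMinAbs + 1)
  have h_sub := cosh_le (z.valMinAbs - 1)
  push_cast [ZMod.coe_valMinAbs] at h_add h_sub
  rw [mul_add, mul_one, Real.cosh_add] at h_add
  rw [mul_sub, mul_one, Real.cosh_sub] at h_sub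
  linarith

lemma two_mul_abs_valMinAbs_le (z : ZMod L) : 2 * |(z.valMinAbs : ℝ)| ≤ L := by
  have h := ZMod.natAbs_valMinAbs_le z
  rw [← Int.cast_abs, Int.abs_eq_natAbs]
  exact_mod_cast (by omega : 2 * z.valMinAbs.natAbs ≤ L)

lemma eight_mul_valMinAbs_sq_div_le_one_sub_cos (z : ZMod L) :
    8 * (z.valMinAbs : ℝ) ^ 2 / (L : ℝ) ^ 2 ≤ 1 - Real.cos (2 * Real.pi * z.valMinAbs / L) := by
  have hL : (0 : ℝ) < L := by exact_mod_cast NeZero.pos L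
  have h_abs : |2 * Real.pi * z.valMinAbs / L| ≤ Real.pi := by
    rw [abs_div, abs_mul, Nat.abs_cast, abs_of_pos Real.two_pi_pos, div_le_iff₀ hL]
    nlinarith [two_mul_abs_valMinAbs_le z, Real.pi_pos]
  have h_cos := Real.cos_le_one_sub_mul_cos_sq h_abs
  have h_eq : 2 / Real.pi ^ 2 * (2 * Real.pi * z.valMinAbs / L) ^ 2 =
      8 * (z.valMinAbs : ℝ) ^ 2 / (L : ℝ) ^ 2 := by
    field_simp
    ring
  linarith

lemma sum_pow_natAbs_valMinAbs_le {r : ℝ} (hr0 : 0 ≤ r) (hr1 : r < 1) :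
    ∑ z : ZMod L, r ^ z.valMinAbs.natAbs ≤ 2 / (1 - r) := by
  have pow_le (z : ZMod L) : r ^ z.valMinAbs.natAbs ≤ r ^ z.val + r ^ (-z).val := by
    have h₁ : 0 ≤ r ^ z.val := by positivity
    have h₂ : 0 ≤ r ^ (-z).val := by positivity
    rw [natAbs_valMinAbs_eq_min_val_neg_val]
    rcases min_choice z.val (-z).val with h | h <;> rw [h] <;> linarith
  have sum_val : ∑ z : ZMod L, r ^ z.val ≤ 1 / (1 - r) := by
    have h_inj := (ZMod.val_injective L).injOn (s := (Finset.univ : Finset (ZMod L)))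
    rw [← Finset.sum_image (f := fun n ↦ r ^ n) h_inj, one_div, ← tsum_geometric_of_lt_one hr0 hr1]
    exact (summable_geometric_of_lt_one hr0 hr1).sum_le_tsum _ fun n _ ↦ by positivity
  calc ∑ z : ZMod L, r ^ z.valMinAbs.natAbs ≤ ∑ z : ZMod L, (r ^ z.val + r ^ (-z).val) :=
        Finset.sum_le_sum fun z _ ↦ pow_le z
    _ = ∑ z : ZMod L, r ^ z.val + ∑ z : ZMod L, r ^ z.val := by
        rw [Finset.sum_add_distrib]
        congr 1
        exact Equiv.sum_comp (Equiv.neg (ZMod L)) fun z ↦ r ^ z.val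
    _ ≤ 1 / (1 - r) + 1 / (1 - r) := add_le_add sum_val sum_val
    _ = 2 / (1 - r) := by ring

lemma sum_exp_neg_sq_mul_valMinAbs_le {s : ℝ} (hs : 0 < s) :
    ∑ z : ZMod L, Real.exp (-(s * z.valMinAbs) ^ 2) ≤ 2 * Real.exp 1 * (1 + 1 / (2 * s)) := by
  have exp_le (z : ZMod L) : Real.exp (-(s * z.valMinAbs) ^ 2) ≤
      Real.exp 1 * Real.exp (-(2 * s)) ^ z.valMinAbs.natAbs := by
    rw [← Real.exp_nat_mul, ← Real.exp_add, Real.exp_le_exp, Nat.cast_natAbs, Int.cast_abs,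
      mul_pow, ← sq_abs (z.valMinAbs : ℝ)]
    nlinarith [sq_nonneg (s * |(z.valMinAbs : ℝ)| - 1)]
  have h_exp : 1 / (1 - Real.exp (-(2 * s))) ≤ 1 + 1 / (2 * s) := by
    have h := Real.add_one_le_exp (2 * s)
    have h' : 1 < Real.exp (2 * s) := by linarith
    rw [Real.exp_neg, div_le_iff₀ (by simpa using inv_lt_one_of_one_lt₀ h')]
    field_simp
    nlinarith
  calc ∑ z : ZMod L, Real.exp (-(s * z.valMinAbs) ^ 2)
      ≤ ∑ z : ZMod L, Real.exp 1 * Real.exp (-(2 * s)) ^ z.valMinAbs.natAbs :=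
        Finset.sum_le_sum fun z _ ↦ exp_le z
    _ ≤ Real.exp 1 * (2 / (1 - Real.exp (-(2 * s)))) := by
        rw [← Finset.mul_sum]
        gcongr
        exact sum_pow_natAbs_valMinAbs_le (Real.exp_nonneg _) (by simpa using hs)
    _ = 2 * Real.exp 1 * (1 / (1 - Real.exp (-(2 * s)))) := by ring
    _ ≤ 2 * Real.exp 1 * (1 + 1 / (2 * s)) := by gcongr

end Residues

section TorusDist

variable {d L : ℕ} [NeZero L]

lemma torusDist_eq_sum_natAbs_valMinAbs (a b : Torus d L) :
    torusDist a b = ∑ i, (a i - b i).valMinAbs.natAbs := by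
  refine Finset.sum_congr rfl fun i _ ↦ ?_
  rw [natAbs_valMinAbs_eq_min_val_neg_val, neg_sub]

lemma torusDist_add_one_le (a b : Torus d L) : (torusDist a b : ℝ) + 1 ≤ (d + 1) * L := by
  have h_sum : torusDist a b ≤ ∑ _i : Fin d, L := by
    rw [torusDist_eq_sum_natAbs_valMinAbs]
    exact Finset.sum_le_sum fun i _ ↦ (ZMod.natAbs_valMinAbs_le _).trans (Nat.div_le_self L 2)
  have hL := NeZero.one_le (n := L)
  simp only [Finset.sum_const, Finset.card_univ, Fintype.card_fin, smul_eq_mul] at h_sum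
  exact_mod_cast (by linarith : torusDist a b + 1 ≤ (d + 1) * L)

lemma exists_torusDist_le_mul_abs_valMinAbs [NeZero d] (a b : Torus d L) :
    ∃ i, (torusDist a b : ℝ) ≤ d * |((a i - b i).valMinAbs : ℝ)| := by
  obtain ⟨i, -, hi⟩ := Finset.exists_max_image Finset.univ
    (fun i ↦ (a i - b i).valMinAbs.natAbs) Finset.univ_nonempty
  refine ⟨i, ?_⟩
  have h_sum : torusDist a b ≤ d * (a i - b i).valMinAbs.natAbs := by
    rw [torusDist_eq_sum_natAbs_valMinAbs]
    simpa using Finset.sum_le_card_nsmul Finset.univ _ _ hi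
  rw [← Int.cast_abs, ← Nat.cast_natAbs]
  exact_mod_cast h_sum

end TorusDist

/-- The matrix on `ℤ_L^d` giving weight `α` to staying put and weight `β` to each of the `2d` steps
`±e_i`. When `L = 2` the steps `e_i` and `-e_i` coincide and are counted twice. -/
def walkMatrix (d L : ℕ) {R : Type*} [Semiring R] (α β : R) : Matrix (Torus d L) (Torus d L) R :=
  Matrix.of fun a b ↦ (if b = a then α else 0) +
    β * ∑ i, ((if b = a + Pi.single i 1 then 1 else 0) + if b = a - Pi.single i 1 then 1 else 0)

/-- Weights of a random walk on `ℤ_L^d` that are bounded below in terms of `c`. The lower bound on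
the holding probability keeps the spectrum of the walk away from `-1`, and the normalization is such
that its Fourier symbol is at most `1 - c ∑ i, (1 - cos (2π p_i / L))` in absolute value. -/
structure IsElliptic (d : ℕ) (c α β : ℝ) : Prop where
  pos : 0 < c
  le_stay : d * c ≤ α
  le_step : c ≤ β
  add_eq_one : α + 2 * d * β = 1

section WalkMatrix

variable {d L : ℕ} {R : Type*}

lemma isSymm_walkMatrix [Semiring R] (α β : R) : (walkMatrix d L α β).IsSymm := by
  ext a b
  have add_iff (e : Torus d L) : a = b + e ↔ b = a - e := eq_comm.trans eq_sub_iff_add_eq.symm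
  have sub_iff (e : Torus d L) : a = b - e ↔ b = a + e := eq_sub_iff_add_eq.trans eq_comm
  simp [walkMatrix, add_iff, sub_iff, eq_comm (a := a), add_comm]

lemma map_walkMatrix {S : Type*} [Semiring R] [Semiring S] (f : R →+* S) (α β : R) :
    (walkMatrix d L α β).map f = walkMatrix d L (f α) (f β) := by
  ext a b
  simp [walkMatrix, apply_ite f]

lemma smul_walkMatrix [Semiring R] (ρ α β : R) :
    ρ • walkMatrix d L α β = walkMatrix d L (ρ * α) (ρ * β) := by
  ext a b
  simp [walkMatrix, mul_add, mul_assoc]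

lemma walkMatrix_mulVec [NeZero L] [CommSemiring R] (α β : R) (f : Torus d L → R)
    (a : Torus d L) :
    (walkMatrix d L α β).mulVec f a =
      α * f a + β * ∑ i, (f (a + Pi.single i 1) + f (a - Pi.single i 1)) := by
  simp only [walkMatrix, Matrix.mulVec, dotProduct, Matrix.of_apply, add_mul,
    Finset.sum_add_distrib, mul_assoc, ← Finset.mul_sum, Finset.sum_mul, ite_mul, one_mul, zero_mul]
  rw [Finset.sum_comm, Finset.sum_comm (s := Finset.univ (α := Torus d L))]
  simp

end WalkMatrix

section Dispersion

lemma pow_mulVec_le_of_mulVec_le {n : Type*} [Fintype n] [DecidableEq n] {P : Matrix n n ℝ}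
    (hP : ∀ a b, 0 ≤ P a b) {w : n → ℝ} {μ : ℝ} (hμ : 0 ≤ μ) (hw : P.mulVec w ≤ μ • w) (k : ℕ) :
    (P ^ k).mulVec w ≤ μ ^ k • w := by
  induction k with
  | zero => simp
  | succ k ih =>
    calc (P ^ (k + 1)).mulVec w = (P ^ k).mulVec (P.mulVec w) := by
          rw [pow_succ, Matrix.mulVec_mulVec]
      _ ≤ (P ^ k).mulVec (μ • w) := fun a ↦ Finset.sum_le_sum fun x _ ↦
          mul_le_mul_of_nonneg_left (hw x) (Matrix.pow_apply_nonneg hP k a x)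
      _ = μ • (P ^ k).mulVec w := Matrix.mulVec_smul _ _ _
      _ ≤ μ • μ ^ k • w := smul_le_smul_of_nonneg_left ih hμ
      _ = μ ^ (k + 1) • w := by rw [smul_smul, pow_succ']

variable {d L : ℕ} {c α β : ℝ}

namespace IsElliptic

lemma stay_nonneg (h : IsElliptic d c α β) : 0 ≤ α :=
  (mul_nonneg d.cast_nonneg h.pos.le).trans h.le_stay

lemma step_pos (h : IsElliptic d c α β) : 0 < β := h.pos.trans_le h.le_step

lemma walkMatrix_nonneg (h : IsElliptic d c α β) (a b : Torus d L) :
    0 ≤ walkMatrix d L α β a b := by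
  have := h.stay_nonneg
  have := h.step_pos
  simp only [walkMatrix, Matrix.of_apply]
  positivity

variable [NeZero L]

lemma walkMatrix_mulVec_cosh_le (h : IsElliptic d c α β) (θ : ℝ) (i : Fin d) (z : ZMod L) :
    (walkMatrix d L α β).mulVec (fun x ↦ Real.cosh (θ * (x i - z).valMinAbs)) ≤
      Real.cosh θ • fun x ↦ Real.cosh (θ * (x i - z).valMinAbs) := by
  intro a
  set w : Torus d L → ℝ := fun x ↦ Real.cosh (θ * (x i - z).valMinAbs) with hw
  have w_pos (x) : 0 < w x := Real.cosh_pos _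
  have one_le := Real.one_le_cosh θ
  have step (j : Fin d) : w (a + Pi.single j 1) + w (a - Pi.single j 1) ≤
      2 * Real.cosh θ * w a := by
    by_cases hij : i = j
    · subst hij
      simpa [hw, add_sub_right_comm, sub_right_comm] using
        cosh_valMinAbs_add_one_add_sub_one_le θ (a i - z)
    · have h_eq : w (a + Pi.single j 1) = w a ∧ w (a - Pi.single j 1) = w a := by simp [hw, hij]
      rw [h_eq.1, h_eq.2]
      nlinarith [w_pos a]
  calc (walkMatrix d L α β).mulVec w a
      = α * w a + β * ∑ j, (w (a + Pi.single j 1) + w (a - Pi.single j 1)) :=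
        walkMatrix_mulVec α β w a
    _ ≤ α * (Real.cosh θ * w a) + β * ∑ _j : Fin d, 2 * Real.cosh θ * w a :=
        add_le_add
          (mul_le_mul_of_nonneg_left (le_mul_of_one_le_left (w_pos a).le one_le) h.stay_nonneg)
          (mul_le_mul_of_nonneg_left (Finset.sum_le_sum fun j _ ↦ step j) h.step_pos.le)
    _ = (α + 2 * d * β) * (Real.cosh θ * w a) := by simp; ring
    _ = Real.cosh θ * w a := by rw [h.add_eq_one, one_mul]

end IsElliptic

lemma cosh_half_mul_le_cosh_add_cosh {θ m u v : ℝ} (h : |m| ≤ |u| + |v|) :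
    Real.cosh (θ / 2 * m) ≤ Real.cosh (θ * u) + Real.cosh (θ * v) := by
  wlog huv : |u| ≤ |v| generalizing u v
  · rw [add_comm]
    exact this (by rwa [add_comm]) (le_of_not_ge huv)
  have h_le : Real.cosh (θ / 2 * m) ≤ Real.cosh (θ * v) := by
    rw [Real.cosh_le_cosh, abs_mul, abs_mul, abs_div, abs_two]
    nlinarith [abs_nonneg θ]
  linarith [Real.cosh_pos (θ * u)]

/- The point visited at time `j` by a path of length `j + l` from `a` to `b` is far from `a` or from
`b`: the exponential moment controls that part of the path and the uniform bound the other. -/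
lemma IsElliptic.cosh_mul_walkMatrix_pow_le [NeZero L] (h : IsElliptic d c α β) {D : ℝ} {j l : ℕ}
    (hj : ∀ a b : Torus d L, (walkMatrix d L α β ^ j) a b ≤ D)
    (hl : ∀ a b : Torus d L, (walkMatrix d L α β ^ l) a b ≤ D)
    (θ : ℝ) (a b : Torus d L) (i : Fin d) :
    Real.cosh (θ / 2 * (a i - b i).valMinAbs) * (walkMatrix d L α β ^ (j + l)) a b ≤
      D * (Real.cosh θ ^ j + Real.cosh θ ^ l) := by
  set P := walkMatrix d L α β
  let w (y x : Torus d L) : ℝ := Real.cosh (θ * (x i - y i).valMinAbs)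
  have w_pos (y x) : 0 < w y x := Real.cosh_pos _
  have P_nonneg (k x y) : 0 ≤ (P ^ k) x y := Matrix.pow_apply_nonneg h.walkMatrix_nonneg k x y
  have P_symm (k x y) : (P ^ k) x y = (P ^ k) y x := ((isSymm_walkMatrix α β).pow k).apply y x
  have moment (k y) : ∑ x, (P ^ k) y x * w y x ≤ Real.cosh θ ^ k := by
    simpa [w, P, Matrix.mulVec, dotProduct] using
      pow_mulVec_le_of_mulVec_le h.walkMatrix_nonneg (Real.cosh_pos θ).le
        (h.walkMatrix_mulVec_cosh_le θ i (y i)) k y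
  calc Real.cosh (θ / 2 * (a i - b i).valMinAbs) * (P ^ (j + l)) a b
      = ∑ x, Real.cosh (θ / 2 * (a i - b i).valMinAbs) * ((P ^ j) a x * (P ^ l) b x) := by
        simp_rw [pow_add, Matrix.mul_apply, Finset.mul_sum, P_symm l _ b]
    _ ≤ ∑ x, (w a x + w b x) * ((P ^ j) a x * (P ^ l) b x) :=
        Finset.sum_le_sum fun x _ ↦ mul_le_mul_of_nonneg_right
          (cosh_half_mul_le_cosh_add_cosh (mod_cast abs_valMinAbs_sub_le_add (a i) (b i) (x i)))
          (mul_nonneg (P_nonneg j a x) (P_nonneg l b x))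
    _ = ∑ x, ((P ^ j) a x * w a x * (P ^ l) b x + (P ^ l) b x * w b x * (P ^ j) a x) :=
        Finset.sum_congr rfl fun x _ ↦ by ring
    _ ≤ ∑ x, ((P ^ j) a x * w a x * D + (P ^ l) b x * w b x * D) :=
        Finset.sum_le_sum fun x _ ↦ add_le_add
          (mul_le_mul_of_nonneg_left (hl b x) (mul_nonneg (P_nonneg j a x) (w_pos a x).le))
          (mul_le_mul_of_nonneg_left (hj a x) (mul_nonneg (P_nonneg l b x) (w_pos b x).le))
    _ = D * (∑ x, (P ^ j) a x * w a x + ∑ x, (P ^ l) b x * w b x) := by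
        rw [Finset.sum_add_distrib, ← Finset.sum_mul, ← Finset.sum_mul]
        ring
    _ ≤ D * (Real.cosh θ ^ j + Real.cosh θ ^ l) :=
        mul_le_mul_of_nonneg_left (add_le_add (moment j a) (moment l b))
          ((P_nonneg j a a).trans (hj a a))

end Dispersion

section Fourier

variable {d L : ℕ} [NeZero L]

/-- The character table of `ℤ_L^d`: rows are indexed by momenta, columns by positions. -/
noncomputable def fourierMatrix (d L : ℕ) [NeZero L] : Matrix (Torus d L) (Torus d L) ℂ :=
  Matrix.of fun p x ↦ ZMod.stdAddChar (p ⬝ᵥ x)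

lemma sum_stdAddChar_dotProduct (x : Torus d L) :
    ∑ p : Torus d L, ZMod.stdAddChar (p ⬝ᵥ x) = if x = 0 then (L : ℂ) ^ d else 0 := by
  let ψ : AddChar (Torus d L) ℂ :=
    ZMod.stdAddChar.compAddMonoidHom (AddMonoidHom.mk' (· ⬝ᵥ x) fun p q ↦ add_dotProduct p q x)
  have trivial_iff : ψ = 0 ↔ x = 0 := by
    refine ⟨fun h ↦ funext fun i ↦ ZMod.injective_stdAddChar ?_, fun h ↦ ?_⟩
    · simpa [ψ] using DFunLike.congr_fun h (Pi.single i 1)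
    · ext p
      simp [ψ, h]
  exact ψ.sum_eq_ite.trans (by simp [trivial_iff])

lemma fourierMatrix_conjTranspose_apply (x p : Torus d L) :
    (fourierMatrix d L).conjTranspose x p = ZMod.stdAddChar (-(p ⬝ᵥ x)) :=
  (AddChar.map_neg_eq_conj ZMod.stdAddChar (p ⬝ᵥ x)).symm

lemma conjTranspose_mul_fourierMatrix :
    (fourierMatrix d L).conjTranspose * fourierMatrix d L = (L : ℂ) ^ d • 1 := by
  ext x y
  simp_rw [Matrix.mul_apply, fourierMatrix_conjTranspose_apply, fourierMatrix, Matrix.of_apply,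
    ← AddChar.map_add_eq_mul, ← dotProduct_neg, ← dotProduct_add, sum_stdAddChar_dotProduct]
  simp [Matrix.one_apply, neg_add_eq_zero]

lemma fourierMatrix_mul_conjTranspose :
    fourierMatrix d L * (fourierMatrix d L).conjTranspose = (L : ℂ) ^ d • 1 := by
  have hL : (L : ℂ) ^ d ≠ 0 := by simp [NeZero.ne L]
  have h := conjTranspose_mul_fourierMatrix (d := d) (L := L)
  rw [← inv_smul_eq_iff₀ hL, ← Matrix.smul_mul, mul_eq_one_comm, Matrix.mul_smul] at h
  exact (inv_smul_eq_iff₀ hL).mp h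

lemma conj_diagonal_fourierMatrix_mul (m m' : Torus d L → ℂ) :
    (fourierMatrix d L).conjTranspose * Matrix.diagonal m * fourierMatrix d L *
        ((fourierMatrix d L).conjTranspose * Matrix.diagonal m' * fourierMatrix d L) =
      (L : ℂ) ^ d •
        ((fourierMatrix d L).conjTranspose * Matrix.diagonal (m * m') * fourierMatrix d L) := by
  have h_diag : Matrix.diagonal (m * m') = Matrix.diagonal m * Matrix.diagonal m' :=
    (Matrix.diagonal_mul_diagonal m m').symm
  have regroup (A B C D E F : Matrix (Torus d L) (Torus d L) ℂ) :
      A * B * C * (D * E * F) = A * B * (C * D) * E * F := by simp only [mul_assoc]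
  rw [regroup, fourierMatrix_mul_conjTranspose, h_diag]
  simp only [Matrix.mul_smul, Matrix.smul_mul, mul_one, mul_assoc]

/-- The translation invariant operator on functions on `ℤ_L^d` that multiplies the plane wave of
momentum `p` by `m p`. -/
noncomputable def fourierMultiplier (d L : ℕ) [NeZero L] :
    (Torus d L → ℂ) →ₐ[ℂ] Matrix (Torus d L) (Torus d L) ℂ :=
  AlgHom.ofLinearMap
    { toFun m := ((L : ℂ) ^ d)⁻¹ •
        ((fourierMatrix d L).conjTranspose * Matrix.diagonal m * fourierMatrix d L)
      map_add' m m' := by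
        rw [← smul_add, ← add_mul, ← mul_add, Matrix.diagonal_add]
        rfl
      map_smul' z m := by
        rw [Matrix.diagonal_smul, Matrix.mul_smul, Matrix.smul_mul, smul_comm, RingHom.id_apply] }
    (by simp [conjTranspose_mul_fourierMatrix, smul_smul, NeZero.ne L])
    fun m m' ↦ by
      simp [conj_diagonal_fourierMatrix_mul, smul_smul, NeZero.ne L]

lemma fourierMultiplier_eq (m : Torus d L → ℂ) :
    fourierMultiplier d L m = ((L : ℂ) ^ d)⁻¹ •
      ((fourierMatrix d L).conjTranspose * Matrix.diagonal m * fourierMatrix d L) :=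
  rfl

lemma fourierMultiplier_apply_apply (m : Torus d L → ℂ) (a b : Torus d L) :
    fourierMultiplier d L m a b =
      ((L : ℂ) ^ d)⁻¹ * ∑ p, m p * ZMod.stdAddChar (p ⬝ᵥ (b - a)) := by
  simp_rw [fourierMultiplier_eq, Matrix.smul_apply, smul_eq_mul,
    Matrix.mul_apply (N := fourierMatrix d L), Matrix.mul_diagonal,
    fourierMatrix_conjTranspose_apply, sub_eq_neg_add, dotProduct_add, dotProduct_neg,
    AddChar.map_add_eq_mul, fourierMatrix, Matrix.of_apply]
  congr! 2 with p
  ring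

lemma norm_fourierMultiplier_le (m : Torus d L → ℂ) (a b : Torus d L) :
    ‖fourierMultiplier d L m a b‖ ≤ ((L : ℝ) ^ d)⁻¹ * ∑ p, ‖m p‖ := by
  rw [fourierMultiplier_apply_apply, norm_mul, norm_inv, norm_pow, Complex.norm_natCast]
  gcongr
  exact norm_sum_le_of_le _ fun p _ ↦ by simp [AddChar.norm_apply]

lemma fourierMultiplier_single_zero (z : ℂ) (a b : Torus d L) :
    fourierMultiplier d L (Pi.single 0 z) a b = ((L : ℂ) ^ d)⁻¹ * z := by
  simp [fourierMultiplier_apply_apply, Pi.single_apply]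

lemma fourierMultiplier_apply_sub_average (m : Torus d L → ℂ) (a b : Torus d L) :
    fourierMultiplier d L m a b -
        ((L : ℂ) ^ (2 * d))⁻¹ * ∑ a', ∑ b', fourierMultiplier d L m a' b' =
      fourierMultiplier d L (Function.update m 0 0) a b := by
  have average : (fourierMultiplier d L (Pi.single 0 1) * fourierMultiplier d L m *
      fourierMultiplier d L (Pi.single 0 1)) a b =
      ((L : ℂ) ^ (2 * d))⁻¹ * ∑ a', ∑ b', fourierMultiplier d L m a' b' := by
    simp_rw [Matrix.mul_apply, fourierMultiplier_single_zero, ← Finset.mul_sum, ← Finset.sum_mul,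
      two_mul, pow_add, mul_inv, mul_one, ← Finset.mul_sum]
    rw [Finset.sum_comm]
    ring
  have remove_zero_mode : m - Pi.single 0 1 * m * Pi.single 0 1 = Function.update m 0 0 := by
    ext p
    rcases eq_or_ne p 0 with rfl | hp <;> simp [*]
  rw [← average, ← remove_zero_mode, map_sub, map_mul, map_mul, Matrix.sub_apply]

/-- The Fourier symbol of `walkMatrix d L α β`. -/
noncomputable def walkSymbol (α β : ℝ) (p : Torus d L) : ℝ :=
  α + 2 * β * ∑ i, Real.cos (2 * Real.pi * (p i).valMinAbs / L)

lemma stdAddChar_add_stdAddChar_neg (z : ZMod L) :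
    (ZMod.stdAddChar z + ZMod.stdAddChar (-z) : ℂ) =
      2 * Real.cos (2 * Real.pi * z.valMinAbs / L) := by
  rw [← ZMod.coe_valMinAbs z, ← Int.cast_neg, ZMod.stdAddChar_coe, ZMod.stdAddChar_coe,
    Complex.ofReal_cos, Complex.two_cos, ZMod.coe_valMinAbs]
  push_cast
  ring_nf

lemma walkMatrix_mul_conjTranspose_fourierMatrix (α β : ℝ) :
    walkMatrix d L (α : ℂ) β * (fourierMatrix d L).conjTranspose =
      (fourierMatrix d L).conjTranspose * Matrix.diagonal fun p ↦ (walkSymbol α β p : ℂ) := by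
  ext x p
  rw [Matrix.mul_diagonal]
  calc (walkMatrix d L (α : ℂ) β * (fourierMatrix d L).conjTranspose) x p
      = (walkMatrix d L (α : ℂ) β).mulVec (fun y ↦ ZMod.stdAddChar (-(p ⬝ᵥ y))) x := by
        simp only [Matrix.mul_apply, Matrix.mulVec, dotProduct, fourierMatrix_conjTranspose_apply]
    _ = ZMod.stdAddChar (-(p ⬝ᵥ x)) *
          (α + β * ∑ i, (ZMod.stdAddChar (p i) + ZMod.stdAddChar (-p i))) := by
        simp_rw [walkMatrix_mulVec, dotProduct_add, dotProduct_sub, dotProduct_single, mul_one,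
          neg_add, neg_sub', sub_neg_eq_add, AddChar.map_add_eq_mul, ← mul_add, ← Finset.mul_sum,
          add_comm (ZMod.stdAddChar (-_))]
        ring
    _ = (fourierMatrix d L).conjTranspose x p * walkSymbol α β p := by
        simp_rw [fourierMatrix_conjTranspose_apply, stdAddChar_add_stdAddChar_neg,
          ← Finset.mul_sum, walkSymbol]
        push_cast
        ring

lemma walkMatrix_eq_fourierMultiplier (α β : ℝ) :
    walkMatrix d L (α : ℂ) β = fourierMultiplier d L fun p ↦ walkSymbol α β p := by
  rw [fourierMultiplier_eq, ← walkMatrix_mul_conjTranspose_fourierMatrix, mul_assoc,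
    conjTranspose_mul_fourierMatrix, Matrix.mul_smul, mul_one,
    inv_smul_smul₀ (by simp [NeZero.ne L])]

end Fourier

section SymbolBounds

variable {d L : ℕ} {c α β : ℝ}

namespace IsElliptic

lemma walkSymbol_zero (h : IsElliptic d c α β) : walkSymbol α β (0 : Torus d L) = 1 := by
  simp only [walkSymbol, Pi.zero_apply, ZMod.valMinAbs_zero, Int.cast_zero, mul_zero, zero_div,
    Real.cos_zero, Finset.sum_const, Finset.card_univ, Fintype.card_fin, nsmul_one]
  linear_combination h.add_eq_one

lemma abs_walkSymbol_le_one_sub_sum_one_sub_cos (h : IsElliptic d c α β) (p : Torus d L) :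
    |walkSymbol α β p| ≤ 1 - c * ∑ i, (1 - Real.cos (2 * Real.pi * (p i).valMinAbs / L)) := by
  set E := ∑ i, (1 - Real.cos (2 * Real.pi * (p i).valMinAbs / L)) with hE
  have E_nonneg : 0 ≤ E := Finset.sum_nonneg fun i _ ↦ sub_nonneg.mpr (Real.cos_le_one _)
  have E_le : E ≤ d * 2 :=
    (Finset.sum_le_card_nsmul Finset.univ _ 2 fun i _ ↦ by
      linarith [Real.neg_one_le_cos (2 * Real.pi * (p i).valMinAbs / L)]).trans_eq (by simp)
  have symbol_eq : walkSymbol α β p = 1 - 2 * β * E := by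
    simp only [walkSymbol, hE, Finset.sum_sub_distrib, Finset.sum_const, Finset.card_univ,
      Fintype.card_fin, nsmul_eq_mul]
    linear_combination h.add_eq_one
  have hc := h.pos
  have hβ := h.le_step
  rw [symbol_eq, abs_le]
  constructor
  · have : (2 * β + c) * E ≤ (2 * β + c) * (d * 2) := by gcongr; linarith
    linarith [h.le_stay, h.add_eq_one]
  · nlinarith

variable [NeZero L]

lemma abs_walkSymbol_le_one_sub_sum_sq (h : IsElliptic d c α β) (p : Torus d L) :
    |walkSymbol α β p| ≤ 1 - 8 * c / (L : ℝ) ^ 2 * ∑ i, ((p i).valMinAbs : ℝ) ^ 2 := by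
  refine (h.abs_walkSymbol_le_one_sub_sum_one_sub_cos p).trans ?_
  have h_sum := Finset.sum_le_sum fun i (_ : i ∈ Finset.univ) ↦
    eight_mul_valMinAbs_sq_div_le_one_sub_cos (p i)
  rw [← Finset.sum_div, ← Finset.mul_sum] at h_sum
  calc 1 - c * ∑ i, (1 - Real.cos (2 * Real.pi * (p i).valMinAbs / L))
      ≤ 1 - c * ((8 * ∑ i, ((p i).valMinAbs : ℝ) ^ 2) / (L : ℝ) ^ 2) :=
        sub_le_sub_left (mul_le_mul_of_nonneg_left h_sum h.pos.le) 1
    _ = 1 - 8 * c / (L : ℝ) ^ 2 * ∑ i, ((p i).valMinAbs : ℝ) ^ 2 := by ring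

lemma abs_walkSymbol_le_one (h : IsElliptic d c α β) (p : Torus d L) : |walkSymbol α β p| ≤ 1 := by
  have := h.pos
  exact (h.abs_walkSymbol_le_one_sub_sum_sq p).trans (sub_le_self 1 (by positivity))

lemma abs_walkSymbol_le_one_sub_of_ne_zero (h : IsElliptic d c α β) {p : Torus d L} (hp : p ≠ 0) :
    |walkSymbol α β p| ≤ 1 - 8 * c / (L : ℝ) ^ 2 := by
  obtain ⟨i, hi⟩ := Function.ne_iff.mp hp
  have one_le : 1 ≤ ((p i).valMinAbs : ℝ) ^ 2 := by
    rw [one_le_sq_iff_one_le_abs]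
    exact_mod_cast Int.one_le_abs (mt (ZMod.valMinAbs_eq_zero _).mp hi)
  have one_le_sum : 1 ≤ ∑ i, ((p i).valMinAbs : ℝ) ^ 2 := one_le.trans <|
    Finset.single_le_sum (fun i _ ↦ sq_nonneg ((p i).valMinAbs : ℝ)) (Finset.mem_univ i)
  have hc := h.pos
  exact (h.abs_walkSymbol_le_one_sub_sum_sq p).trans
    (sub_le_sub_left (le_mul_of_one_le_right (by positivity) one_le_sum) 1)

/- The exponent may be `k + 1` instead of `k`, at the cost of a factor `e`, because
`|walkSymbol α β p| ≥ 0` forces `8 * c / L ^ 2 * ∑ i, (p i) ^ 2 ≤ 1`. -/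
lemma abs_walkSymbol_pow_le_prod_exp (h : IsElliptic d c α β) (p : Torus d L) (k : ℕ) :
    |walkSymbol α β p| ^ k ≤
      Real.exp 1 * ∏ i, Real.exp (-(√(8 * c * (k + 1)) / L * (p i).valMinAbs) ^ 2) := by
  set Q := 8 * c / (L : ℝ) ^ 2 * ∑ i, ((p i).valMinAbs : ℝ) ^ 2 with hQ
  have abs_le : |walkSymbol α β p| ≤ 1 - Q := h.abs_walkSymbol_le_one_sub_sum_sq p
  have Q_le : Q ≤ 1 := by linarith [abs_nonneg (walkSymbol α β p)]
  have hc := h.pos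
  calc |walkSymbol α β p| ^ k ≤ Real.exp (-Q) ^ k := by
        gcongr
        exact abs_le.trans (Real.one_sub_le_exp_neg Q)
    _ = Real.exp (k * -Q) := (Real.exp_nat_mul _ k).symm
    _ ≤ Real.exp (1 + -((k + 1) * Q)) := Real.exp_le_exp.mpr (by linarith)
    _ = Real.exp 1 * ∏ i, Real.exp (-(√(8 * c * (k + 1)) / L * (p i).valMinAbs) ^ 2) := by
        rw [Real.exp_add, ← Real.exp_sum, Finset.sum_neg_distrib]
        simp_rw [mul_pow, div_pow]
        rw [Real.sq_sqrt (by positivity), ← Finset.mul_sum, hQ]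
        ring_nf

end IsElliptic

lemma exists_sum_abs_walkSymbol_pow_le (d : ℕ) {c : ℝ} (hc : 0 < c) :
    ∃ C, 0 < C ∧ ∀ (L : ℕ) [NeZero L] (α β : ℝ), IsElliptic d c α β → ∀ k ≤ L ^ 2,
      ((L : ℝ) ^ d)⁻¹ * ∑ p : Torus d L, |walkSymbol α β p| ^ k ≤ C / √(k + 1) ^ d := by
  refine ⟨Real.exp 1 * (2 * Real.exp 1 * (2 + 1 / (2 * √(8 * c)))) ^ d, by positivity, ?_⟩
  intro L _ α β h k hk
  have hL : (0 : ℝ) < L := by exact_mod_cast NeZero.pos L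
  set s : ℝ := √(8 * c * (k + 1)) / L with hs
  have s_pos : 0 < s := by positivity
  have sqrt_le : √(k + 1) ≤ 2 * L := by
    have h_one : (1 : ℝ) ≤ L := by exact_mod_cast NeZero.one_le
    have hk' : (k : ℝ) ≤ L ^ 2 := by exact_mod_cast hk
    exact Real.sqrt_le_iff.mpr ⟨by positivity, by nlinarith⟩
  have one_dim : (L : ℝ)⁻¹ * ∑ z : ZMod L, Real.exp (-(s * z.valMinAbs) ^ 2) ≤
      2 * Real.exp 1 * (2 + 1 / (2 * √(8 * c))) / √(k + 1) := by
    calc (L : ℝ)⁻¹ * ∑ z : ZMod L, Real.exp (-(s * z.valMinAbs) ^ 2)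
        ≤ (L : ℝ)⁻¹ * (2 * Real.exp 1 * (1 + 1 / (2 * s))) := by
          gcongr
          exact sum_exp_neg_sq_mul_valMinAbs_le s_pos
      _ = 2 * Real.exp 1 * (1 / L + 1 / (2 * √(8 * c)) / √(k + 1)) := by
          rw [hs, Real.sqrt_mul (by positivity)]
          field_simp
      _ ≤ 2 * Real.exp 1 * (2 / √(k + 1) + 1 / (2 * √(8 * c)) / √(k + 1)) := by
          gcongr 2 * Real.exp 1 * (?_ + _)
          rw [div_le_div_iff₀ hL (by positivity)]
          linarith
      _ = 2 * Real.exp 1 * (2 + 1 / (2 * √(8 * c))) / √(k + 1) := by ring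
  calc ((L : ℝ) ^ d)⁻¹ * ∑ p : Torus d L, |walkSymbol α β p| ^ k
      ≤ ((L : ℝ) ^ d)⁻¹ * ∑ p : Torus d L,
          Real.exp 1 * ∏ i, Real.exp (-(s * (p i).valMinAbs) ^ 2) := by
        gcongr with p
        exact h.abs_walkSymbol_pow_le_prod_exp p k
    _ = Real.exp 1 * ((L : ℝ)⁻¹ * ∑ z : ZMod L, Real.exp (-(s * z.valMinAbs) ^ 2)) ^ d := by
        rw [← Finset.mul_sum, mul_pow, inv_pow, Fintype.sum_pow]
        ring
    _ ≤ Real.exp 1 * (2 * Real.exp 1 * (2 + 1 / (2 * √(8 * c))) / √(k + 1)) ^ d := by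
        gcongr
    _ = _ := by rw [div_pow, mul_div_assoc]

end SymbolBounds

section HeatKernel

variable {d L : ℕ} [NeZero L] {c α β : ℝ}

lemma ofReal_walkMatrix_pow_apply (α β : ℝ) (k : ℕ) (a b : Torus d L) :
    ((walkMatrix d L α β ^ k) a b : ℂ) =
      fourierMultiplier d L ((fun p ↦ (walkSymbol α β p : ℂ)) ^ k) a b := by
  rw [map_pow, ← walkMatrix_eq_fourierMultiplier]
  have h_map := map_pow Complex.ofRealHom.mapMatrix (walkMatrix d L α β) k
  simp only [RingHom.mapMatrix_apply, map_walkMatrix] at h_map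
  exact congr_fun₂ h_map a b

lemma exists_walkMatrix_pow_le (d : ℕ) {c : ℝ} (hc : 0 < c) :
    ∃ C, 0 < C ∧ ∀ (L : ℕ) [NeZero L] (α β : ℝ), IsElliptic d c α β → ∀ k ≤ L ^ 2,
      ∀ a b : Torus d L, (walkMatrix d L α β ^ k) a b ≤ C / √(k + 1) ^ d := by
  obtain ⟨C, hC, h_sum⟩ := exists_sum_abs_walkSymbol_pow_le d hc
  refine ⟨C, hC, fun L _ α β h k hk a b ↦ ?_⟩
  calc (walkMatrix d L α β ^ k) a b ≤ ‖(((walkMatrix d L α β ^ k) a b : ℝ) : ℂ)‖ :=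
        (Complex.re_le_norm _).trans_eq' (Complex.ofReal_re _).symm
    _ ≤ ((L : ℝ) ^ d)⁻¹ * ∑ p : Torus d L, |walkSymbol α β p| ^ k := by
        rw [ofReal_walkMatrix_pow_apply]
        exact (norm_fourierMultiplier_le _ a b).trans_eq (by simp)
    _ ≤ C / √(k + 1) ^ d := h_sum L α β h k hk

lemma one_add_pow_le_mul_cosh (d : ℕ) {y : ℝ} (hy : 0 ≤ y) :
    (1 + y) ^ d ≤ 2 * Real.exp 1 * d.factorial * Real.cosh y := by
  have h_pow := Real.pow_div_factorial_le_exp (1 + y) (by linarith) d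
  rw [div_le_iff₀ (by positivity), Real.exp_add] at h_pow
  have h_exp : Real.exp y ≤ 2 * Real.cosh y := by
    rw [Real.cosh_eq]
    linarith [Real.exp_pos (-y)]
  calc (1 + y) ^ d ≤ Real.exp 1 * Real.exp y * d.factorial := h_pow
    _ ≤ Real.exp 1 * (2 * Real.cosh y) * d.factorial := by gcongr
    _ = 2 * Real.exp 1 * d.factorial * Real.cosh y := by ring

lemma cosh_inv_sqrt_pow_le {j k : ℕ} (hjk : j ≤ k) : Real.cosh (1 / √(k + 1)) ^ j ≤ Real.exp 1 := by
  have hj : (j : ℝ) ≤ k := by exact_mod_cast hjk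
  calc Real.cosh (1 / √(k + 1)) ^ j ≤ Real.exp ((1 / √(k + 1)) ^ 2 / 2) ^ j := by
        gcongr
        exact Real.cosh_le_exp_half_sq _
    _ = Real.exp (j * ((1 / √(k + 1)) ^ 2 / 2)) := (Real.exp_nat_mul _ j).symm
    _ ≤ Real.exp 1 := by
        rw [Real.exp_le_exp, div_pow, Real.sq_sqrt (by positivity)]
        field_simp
        linarith

/- Chernoff's bound with parameter `1 / √(k + 1)`. -/
lemma IsElliptic.cosh_mul_walkMatrix_pow_le_of_diffusive (h : IsElliptic d c α β) {C : ℝ}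
    (hC : 0 < C) (hCL : ∀ k ≤ L ^ 2, ∀ a b : Torus d L,
      (walkMatrix d L α β ^ k) a b ≤ C / √(k + 1) ^ d)
    {k : ℕ} (hk : k ≤ L ^ 2) (a b : Torus d L) (i : Fin d) :
    Real.cosh (|((a i - b i).valMinAbs : ℝ)| / (2 * √(k + 1))) * (walkMatrix d L α β ^ k) a b ≤
      2 ^ (d + 1) * Real.exp 1 * C / √(k + 1) ^ d := by
  have half_le {j : ℕ} (hj : j ≤ k) (hkj : k ≤ 2 * j + 1) (x y : Torus d L) :
      (walkMatrix d L α β ^ j) x y ≤ 2 ^ d * C / √(k + 1) ^ d := by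
    have hkj' : (k : ℝ) ≤ 2 * j + 1 := by exact_mod_cast hkj
    have sqrt_le : √(k + 1) ≤ 2 * √(j + 1) := by
      rw [Real.sqrt_le_left (by positivity), mul_pow, Real.sq_sqrt (by positivity)]
      linarith
    calc (walkMatrix d L α β ^ j) x y ≤ C / √(j + 1) ^ d := hCL j (hj.trans hk) x y
      _ ≤ C / (√(k + 1) / 2) ^ d := by
          gcongr
          linarith
      _ = 2 ^ d * C / √(k + 1) ^ d := by rw [div_pow, div_div_eq_mul_div, mul_comm]
  have h_mul := h.cosh_mul_walkMatrix_pow_le (half_le (j := k / 2) (by omega) (by omega))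
    (half_le (j := k - k / 2) (by omega) (by omega)) (1 / √(k + 1)) a b i
  rw [Nat.add_sub_cancel' (Nat.div_le_self k 2)] at h_mul
  calc Real.cosh (|((a i - b i).valMinAbs : ℝ)| / (2 * √(k + 1))) * (walkMatrix d L α β ^ k) a b
      = Real.cosh (1 / √(k + 1) / 2 * (a i - b i).valMinAbs) * (walkMatrix d L α β ^ k) a b := by
        rw [← Real.cosh_abs (1 / √(k + 1) / 2 * _), abs_mul,
          abs_of_pos (by positivity : 0 < 1 / √(k + 1) / 2)]
        ring_nf
    _ ≤ 2 ^ d * C / √(k + 1) ^ d * (Real.exp 1 + Real.exp 1) := h_mul.trans <| by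
        gcongr
        · exact cosh_inv_sqrt_pow_le (Nat.div_le_self k 2)
        · exact cosh_inv_sqrt_pow_le (Nat.sub_le k _)
    _ = 2 ^ (d + 1) * Real.exp 1 * C / √(k + 1) ^ d := by ring

lemma exists_walkMatrix_pow_le_torusDist (d : ℕ) [NeZero d] {c : ℝ} (hc : 0 < c) :
    ∃ C, 0 < C ∧ ∀ (L : ℕ) [NeZero L] (α β : ℝ), IsElliptic d c α β → ∀ k ≤ L ^ 2,
      ∀ a b : Torus d L,
        (walkMatrix d L α β ^ k) a b ≤ C / (√(k + 1) + (torusDist a b + 1)) ^ d := by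
  obtain ⟨C, hC, h_diag⟩ := exists_walkMatrix_pow_le d hc
  refine ⟨(2 * d) ^ d * (2 * Real.exp 1 * d.factorial * (2 ^ (d + 1) * Real.exp 1 * C)), ?_, ?_⟩
  · have : 0 < (d : ℝ) := by exact_mod_cast NeZero.pos d
    positivity
  intro L _ α β h k hk a b
  obtain ⟨i, hi⟩ := exists_torusDist_le_mul_abs_valMinAbs a b
  set m := |((a i - b i).valMinAbs : ℝ)|
  set s := √((k : ℝ) + 1)
  set q := (walkMatrix d L α β ^ k) a b
  have q_nonneg : 0 ≤ q := Matrix.pow_apply_nonneg h.walkMatrix_nonneg k a b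
  have one_le_s : 1 ≤ s := Real.one_le_sqrt.mpr (by simp)
  have one_le_d : (1 : ℝ) ≤ d := by exact_mod_cast NeZero.one_le
  have m_nonneg : 0 ≤ m := abs_nonneg _
  have s_add_le : s + (torusDist a b + 1) ≤ 2 * d * (s * (1 + m / (2 * s))) := by
    have : s * (1 + m / (2 * s)) = s + m / 2 := by field_simp
    rw [this]
    nlinarith
  rw [le_div_iff₀ (by positivity)]
  calc q * (s + (torusDist a b + 1)) ^ d
      ≤ q * (2 * d * (s * (1 + m / (2 * s)))) ^ d := by gcongr
    _ = (2 * d) ^ d * s ^ d * ((1 + m / (2 * s)) ^ d * q) := by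
        rw [mul_pow (2 * (d : ℝ)), mul_pow s]
        ring
    _ ≤ (2 * d) ^ d * s ^ d * (2 * Real.exp 1 * d.factorial * Real.cosh (m / (2 * s)) * q) := by
        gcongr
        exact one_add_pow_le_mul_cosh d (by positivity)
    _ = (2 * d) ^ d * s ^ d * (2 * Real.exp 1 * d.factorial * (Real.cosh (m / (2 * s)) * q)) := by
        ring
    _ ≤ (2 * d) ^ d * s ^ d *
          (2 * Real.exp 1 * d.factorial * (2 ^ (d + 1) * Real.exp 1 * C / s ^ d)) := by
        gcongr
        exact h.cosh_mul_walkMatrix_pow_le_of_diffusive hC (h_diag L α β h) hk a b i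
    _ = _ := by field_simp

lemma one_div_sqrt_add_pow_le_sub (n k : ℕ) {r : ℝ} (hr : 0 < r) :
    1 / (√(k + 1) + r) ^ (n + 3) ≤ 2 / r ^ n * (1 / (√k + r) - 1 / (√(k + 1) + r)) := by
  set u := √(k : ℝ)
  set v := √((k : ℝ) + 1)
  have u_le_v : u ≤ v := Real.sqrt_le_sqrt (by simp)
  have v_pos : 0 < v := by positivity
  have sq_sub_sq : v ^ 2 - u ^ 2 = 1 := by
    rw [Real.sq_sqrt (by positivity), Real.sq_sqrt (by positivity)]
    ring
  have decrement : 1 / (2 * (v + r) ^ 3) ≤ 1 / (u + r) - 1 / (v + r) := by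
    calc 1 / (2 * (v + r) ^ 3) = 1 / ((v + r) * (v + r) * (2 * (v + r))) := by ring
      _ ≤ 1 / ((u + r) * (v + r) * (u + v)) := by
          gcongr
          linarith
      _ = 1 / (u + r) - 1 / (v + r) := by
          rw [div_sub_div _ _ (by positivity) (by positivity),
            div_eq_div_iff (by positivity) (by positivity)]
          linear_combination -(u + r) * (v + r) * sq_sub_sq
  calc 1 / (v + r) ^ (n + 3) ≤ 1 / (r ^ n * (v + r) ^ 3) := by
        rw [pow_add]
        gcongr
        linarith
    _ = 2 / r ^ n * (1 / (2 * (v + r) ^ 3)) := by field_simp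
    _ ≤ 2 / r ^ n * (1 / (u + r) - 1 / (v + r)) := by gcongr

lemma sum_one_div_sqrt_add_pow_le {d : ℕ} (hd : 3 ≤ d) {r : ℝ} (hr : 0 < r) (K : ℕ) :
    ∑ k ∈ Finset.range K, 1 / (√(k + 1) + r) ^ d ≤ 2 / r ^ (d - 2) := by
  obtain ⟨n, rfl⟩ := Nat.exists_eq_add_of_le' hd
  calc ∑ k ∈ Finset.range K, 1 / (√(k + 1) + r) ^ (n + 3)
      ≤ ∑ k ∈ Finset.range K,
          2 / r ^ n * (1 / (√(k : ℝ) + r) - 1 / (√((k + 1 : ℕ) : ℝ) + r)) :=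
        Finset.sum_le_sum fun k _ ↦ mod_cast one_div_sqrt_add_pow_le_sub n k hr
    _ = 2 / r ^ n * (1 / r - 1 / (√K + r)) := by
        rw [← Finset.mul_sum, Finset.sum_range_sub' fun k : ℕ ↦ 1 / (√(k : ℝ) + r)]
        simp
    _ ≤ 2 / r ^ n * (1 / r) := by
        gcongr
        exact sub_le_self _ (by positivity)
    _ = 2 / r ^ (n + 1) := by
        rw [pow_succ]
        field_simp

end HeatKernel

section Resolvent

variable {d L : ℕ} {c α β : ℝ} {ξ : ℂ}

namespace IsElliptic

lemma norm_mul_walkSymbol_lt_one [NeZero L] (h : IsElliptic d c α β) (hξ : ‖ξ‖ < 1)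
    (p : Torus d L) : ‖ξ * walkSymbol α β p‖ < 1 := by
  rw [norm_mul, Complex.norm_real]
  exact (mul_le_of_le_one_right (norm_nonneg ξ) (h.abs_walkSymbol_le_one p)).trans_lt hξ

lemma one_sub_mul_walkSymbol_ne_zero [NeZero L] (h : IsElliptic d c α β) (hξ : ‖ξ‖ < 1)
    (p : Torus d L) : 1 - ξ * walkSymbol α β p ≠ 0 := by
  refine sub_ne_zero.mpr fun h_eq ↦ (h.norm_mul_walkSymbol_lt_one hξ p).ne ?_
  rw [← h_eq, norm_one]

lemma inv_one_sub_smul_walkMatrix [NeZero L] (h : IsElliptic d c α β) (hξ : ‖ξ‖ < 1) :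
    (1 - ξ • walkMatrix d L (α : ℂ) β)⁻¹ =
      fourierMultiplier d L fun p ↦ (1 - ξ * walkSymbol α β p)⁻¹ := by
  refine Matrix.inv_eq_right_inv ?_
  rw [walkMatrix_eq_fourierMultiplier, ← map_smul, ← map_one (fourierMultiplier d L), ← map_sub,
    ← map_mul]
  congr 1
  ext p
  simp [h.one_sub_mul_walkSymbol_ne_zero hξ p]

end IsElliptic

/-- What is left at nonzero momenta of the Neumann series of `(1 - ξ S)⁻¹`, where `S` is the walk
matrix, after its first `K` terms have been removed. -/
noncomputable def neumannTail (K : ℕ) (ξ : ℂ) (α β : ℝ) : Torus d L → ℂ :=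
  Function.update (fun p ↦ (ξ * walkSymbol α β p) ^ K / (1 - ξ * walkSymbol α β p)) 0 0

lemma IsElliptic.update_inv_one_sub_mul_walkSymbol [NeZero L] (h : IsElliptic d c α β)
    (hξ : ‖ξ‖ < 1) (K : ℕ) :
    Function.update (fun p : Torus d L ↦ (1 - ξ * walkSymbol α β p)⁻¹) 0 0 =
      ∑ k ∈ Finset.range K, ξ ^ k • ((fun p ↦ (walkSymbol α β p : ℂ)) ^ k - Pi.single 0 1) +
        neumannTail K ξ α β := by
  ext p
  have h_ne := h.one_sub_mul_walkSymbol_ne_zero hξ p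
  simp only [neumannTail, Pi.add_apply, Finset.sum_apply, Pi.smul_apply, Pi.sub_apply,
    Pi.pow_apply, smul_eq_mul]
  rcases eq_or_ne p 0 with rfl | hp
  · simp [h.walkSymbol_zero]
  · simp only [Function.update_of_ne hp, Pi.single_eq_of_ne hp, sub_zero, ← mul_pow]
    rw [inv_eq_one_div, eq_comm, ← eq_sub_iff_add_eq, ← sub_div, eq_div_iff h_ne, geom_sum_mul_neg]

lemma IsElliptic.norm_neumannTail_le [NeZero L] (h : IsElliptic d c α β) (hξ : ‖ξ‖ < 1) (K : ℕ)
    (p : Torus d L) :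
    ‖neumannTail K ξ α β p‖ ≤ (L : ℝ) ^ 2 / (8 * c) * |walkSymbol α β p| ^ K := by
  have hc := h.pos
  have hL : (0 : ℝ) < L := by exact_mod_cast NeZero.pos L
  rcases eq_or_ne p 0 with rfl | hp
  · simp only [neumannTail, Function.update_self, norm_zero]
    positivity
  have gap : 8 * c / (L : ℝ) ^ 2 ≤ ‖1 - ξ * walkSymbol α β p‖ := by
    have h_le : ‖ξ * walkSymbol α β p‖ ≤ |walkSymbol α β p| := by
      rw [norm_mul, Complex.norm_real]
      exact mul_le_of_le_one_left (abs_nonneg _) hξ.le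
    have h_rev := norm_sub_norm_le 1 (ξ * walkSymbol α β p)
    rw [norm_one] at h_rev
    linarith [h.abs_walkSymbol_le_one_sub_of_ne_zero hp]
  rw [neumannTail, Function.update_of_ne hp, norm_div, norm_pow, norm_mul, Complex.norm_real]
  calc (‖ξ‖ * ‖walkSymbol α β p‖) ^ K / ‖1 - ξ * walkSymbol α β p‖
      ≤ (1 * ‖walkSymbol α β p‖) ^ K / (8 * c / (L : ℝ) ^ 2) := by gcongr
    _ = (L : ℝ) ^ 2 / (8 * c) * |walkSymbol α β p| ^ K := by
        rw [one_mul, Real.norm_eq_abs]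
        field_simp

lemma IsElliptic.norm_inv_one_sub_smul_walkMatrix_sub_average_le [NeZero L]
    (h : IsElliptic d c α β) (hξ : ‖ξ‖ < 1) (K : ℕ) (a b : Torus d L) :
    ‖(1 - ξ • walkMatrix d L (α : ℂ) β)⁻¹ a b -
        ((L : ℂ) ^ (2 * d))⁻¹ * ∑ a', ∑ b', (1 - ξ • walkMatrix d L (α : ℂ) β)⁻¹ a' b'‖ ≤
      ∑ k ∈ Finset.range K, (walkMatrix d L α β ^ k) a b + K * ((L : ℝ) ^ d)⁻¹ +
        (L : ℝ) ^ 2 / (8 * c) * (((L : ℝ) ^ d)⁻¹ * ∑ p : Torus d L, |walkSymbol α β p| ^ K) := by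
  have term_le (k : ℕ) : ‖fourierMultiplier d L
      (ξ ^ k • ((fun p ↦ (walkSymbol α β p : ℂ)) ^ k - Pi.single 0 1)) a b‖ ≤
      (walkMatrix d L α β ^ k) a b + ((L : ℝ) ^ d)⁻¹ := by
    rw [map_smul, map_sub, Matrix.smul_apply, Matrix.sub_apply, ← ofReal_walkMatrix_pow_apply,
      fourierMultiplier_single_zero, smul_eq_mul, norm_mul, norm_pow]
    refine (mul_le_of_le_one_left (norm_nonneg _) (pow_le_one₀ (norm_nonneg ξ) hξ.le)).trans ?_
    refine (norm_sub_le _ _).trans_eq ?_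
    rw [Complex.norm_of_nonneg (Matrix.pow_apply_nonneg h.walkMatrix_nonneg k a b)]
    simp
  rw [h.inv_one_sub_smul_walkMatrix hξ, fourierMultiplier_apply_sub_average,
    h.update_inv_one_sub_mul_walkSymbol hξ K, map_add, map_sum, Matrix.add_apply, Matrix.sum_apply]
  refine (norm_add_le _ _).trans (add_le_add ?_ ?_)
  · refine (norm_sum_le_of_le _ fun k _ ↦ term_le k).trans_eq ?_
    simp [Finset.sum_add_distrib]
  · calc ‖fourierMultiplier d L (neumannTail K ξ α β) a b‖
        ≤ ((L : ℝ) ^ d)⁻¹ * ∑ p : Torus d L, ‖neumannTail K ξ α β p‖ :=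
          norm_fourierMultiplier_le _ a b
      _ ≤ ((L : ℝ) ^ d)⁻¹ * ∑ p : Torus d L, (L : ℝ) ^ 2 / (8 * c) * |walkSymbol α β p| ^ K := by
          gcongr with p
          exact h.norm_neumannTail_le hξ K p
      _ = _ := by
          rw [← Finset.mul_sum]
          ring

lemma sq_div_pow_le_div_torusDist_pow [NeZero L] (hd : 2 ≤ d) (a b : Torus d L) :
    (L : ℝ) ^ 2 / L ^ d ≤ (d + 1) ^ (d - 2) / ((torusDist a b : ℝ) + 1) ^ (d - 2) := by
  obtain ⟨n, rfl⟩ := Nat.exists_eq_add_of_le' hd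
  have hL : (0 : ℝ) < L := by exact_mod_cast NeZero.pos L
  have h_dist := torusDist_add_one_le a b
  rw [Nat.add_sub_cancel, le_div_iff₀ (by positivity)]
  calc (L : ℝ) ^ 2 / L ^ (n + 2) * ((torusDist a b : ℝ) + 1) ^ n
      ≤ (L : ℝ) ^ 2 / L ^ (n + 2) * ((((n + 2 : ℕ) : ℝ) + 1) * L) ^ n := by gcongr
    _ = (((n + 2 : ℕ) : ℝ) + 1) ^ n := by
        rw [mul_pow, pow_add]
        field_simp

theorem exists_norm_inv_one_sub_smul_walkMatrix_sub_average_le {d : ℕ} (hd : 3 ≤ d) {c : ℝ}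
    (hc : 0 < c) :
    ∃ C, 0 < C ∧ ∀ (L : ℕ) [NeZero L] (α β : ℝ), IsElliptic d c α β → ∀ ξ : ℂ, ‖ξ‖ < 1 →
      ∀ a b : Torus d L,
        ‖(1 - ξ • walkMatrix d L (α : ℂ) β)⁻¹ a b -
            ((L : ℂ) ^ (2 * d))⁻¹ * ∑ a', ∑ b', (1 - ξ • walkMatrix d L (α : ℂ) β)⁻¹ a' b'‖ ≤
          C / ((torusDist a b : ℝ) + 1) ^ (d - 2) := by
  have : NeZero d := ⟨by omega⟩
  obtain ⟨C₁, hC₁, heat⟩ := exists_walkMatrix_pow_le_torusDist d hc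
  obtain ⟨C₂, hC₂, diag⟩ := exists_sum_abs_walkSymbol_pow_le d hc
  refine ⟨2 * C₁ + (1 + C₂ / (8 * c)) * (d + 1) ^ (d - 2), by positivity, ?_⟩
  intro L _ α β h ξ hξ a b
  have hL : (0 : ℝ) < L := by exact_mod_cast NeZero.pos L
  set r := (torusDist a b : ℝ) + 1
  have h_heat : ∑ k ∈ Finset.range (L ^ 2), (walkMatrix d L α β ^ k) a b ≤
      C₁ * (2 / r ^ (d - 2)) := by
    calc ∑ k ∈ Finset.range (L ^ 2), (walkMatrix d L α β ^ k) a b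
        ≤ ∑ k ∈ Finset.range (L ^ 2), C₁ * (1 / (√(k + 1) + r) ^ d) :=
          Finset.sum_le_sum fun k hk ↦
            (heat L α β h k (Finset.mem_range.mp hk).le a b).trans_eq (mul_one_div _ _).symm
      _ ≤ C₁ * (2 / r ^ (d - 2)) := by
          rw [← Finset.mul_sum]
          gcongr
          exact sum_one_div_sqrt_add_pow_le hd (by positivity) _
  have h_tail : ((L : ℝ) ^ d)⁻¹ * ∑ p : Torus d L, |walkSymbol α β p| ^ (L ^ 2) ≤ C₂ / L ^ d := by
    refine (diag L α β h (L ^ 2) le_rfl).trans ?_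
    gcongr
    refine Real.le_sqrt_of_sq_le ?_
    push_cast
    linarith
  calc _ ≤ C₁ * (2 / r ^ (d - 2)) + (L ^ 2 : ℕ) * ((L : ℝ) ^ d)⁻¹ +
        (L : ℝ) ^ 2 / (8 * c) * (C₂ / L ^ d) :=
        (h.norm_inv_one_sub_smul_walkMatrix_sub_average_le hξ (L ^ 2) a b).trans (by gcongr)
    _ = 2 * C₁ / r ^ (d - 2) + (1 + C₂ / (8 * c)) * ((L : ℝ) ^ 2 / L ^ d) := by
        push_cast
        ring
    _ ≤ 2 * C₁ / r ^ (d - 2) + (1 + C₂ / (8 * c)) * ((d + 1) ^ (d - 2) / r ^ (d - 2)) := by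
        gcongr _ + _ * ?_
        exact sq_div_pow_le_div_torusDist_pow (by omega) a b
    _ = _ := by ring

end Resolvent

section VarianceMatrix

variable {d L : ℕ}

lemma sum_eq_one_iff_eq_single {ι : Type*} [Fintype ι] [DecidableEq ι] (f : ι → ℕ) :
    ∑ i, f i = 1 ↔ ∃ i, f = Pi.single i 1 := by
  have h := Finsupp.sum_eq_one_iff (Finsupp.equivFunOnFinite.symm f)
  rw [Finsupp.sum_fintype _ _ fun _ ↦ rfl] at h
  simp_rw [Equiv.symm_apply_eq, Finsupp.equivFunOnFinite_single] at h
  exact h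

lemma natAbs_valMinAbs_eq_one_iff (hL : 2 ≤ L) (z : ZMod L) :
    z.valMinAbs.natAbs = 1 ↔ z = 1 ∨ z = -1 := by
  have : Fact (1 < L) := ⟨hL⟩
  have : NeZero L := ⟨by omega⟩
  have one : (1 : ZMod L).valMinAbs.natAbs = 1 := by
    rw [ZMod.valMinAbs_natAbs_eq_min, ZMod.val_one]
    omega
  refine ⟨fun h ↦ ?_, ?_⟩
  · rw [← ZMod.coe_valMinAbs z]
    rcases Int.natAbs_eq z.valMinAbs with h' | h' <;> rw [h', h] <;> simp
  · rintro (rfl | rfl)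
    · exact one
    · rw [ZMod.natAbs_valMinAbs_neg, one]

lemma torusDist_eq_one_iff [NeZero L] (hL : 2 ≤ L) (a b : Torus d L) :
    torusDist a b = 1 ↔ ∃ i, b = a + Pi.single i 1 ∨ b = a - Pi.single i 1 := by
  rw [torusDist_eq_sum_natAbs_valMinAbs, sum_eq_one_iff_eq_single]
  refine exists_congr fun i ↦ ⟨fun h ↦ ?_, fun h ↦ ?_⟩
  · have apply_i := congr_fun h i
    have apply_ne (j) (hj : j ≠ i) : b j = a j := by
      have h_zero := congr_fun h j
      rw [Pi.single_eq_of_ne hj, Int.natAbs_eq_zero, ZMod.valMinAbs_eq_zero] at h_zero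
      exact (sub_eq_zero.mp h_zero).symm
    rw [Pi.single_eq_same, natAbs_valMinAbs_eq_one_iff hL] at apply_i
    refine apply_i.symm.imp (fun h_eq ↦ ?_) fun h_eq ↦ ?_ <;>
    · ext j
      rcases eq_or_ne j i with rfl | hj
      · simp only [Pi.add_apply, Pi.sub_apply, Pi.single_eq_same]
        linear_combination -h_eq
      · simp [hj, apply_ne j hj]
  · ext j
    rcases eq_or_ne j i with rfl | hj
    · rw [Pi.single_eq_same, natAbs_valMinAbs_eq_one_iff hL]
      rcases h with rfl | rfl <;> simp
    · rcases h with rfl | rfl <;> simp [hj]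

lemma single_one_eq_single_iff [Nontrivial (ZMod L)] (i j : Fin d) (z : ZMod L) :
    (Pi.single i 1 : Torus d L) = Pi.single j z ↔ i = j ∧ z = 1 := by
  refine ⟨fun h ↦ ?_, by rintro ⟨rfl, rfl⟩; rfl⟩
  have apply_i := congr_fun h i
  rcases eq_or_ne i j with rfl | hij
  · simpa [eq_comm] using apply_i
  · simp [hij] at apply_i

lemma neg_one_eq_one_iff_eq_two (hL : 2 ≤ L) : (-1 : ZMod L) = 1 ↔ L = 2 := by
  rw [neg_eq_iff_add_eq_zero, one_add_one_eq_two, ← Nat.cast_ofNat, ZMod.natCast_eq_zero_iff]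
  exact ⟨fun h ↦ le_antisymm (Nat.le_of_dvd two_pos h) hL, fun h ↦ h ▸ dvd_rfl⟩

lemma sum_ite_eq_add_ite_eq_sub [NeZero L] (hL : 2 ≤ L) {R : Type*} [Semiring R] (a b : Torus d L) :
    ∑ i, ((if b = a + Pi.single i 1 then 1 else 0) + if b = a - Pi.single i 1 then 1 else 0) =
      if torusDist a b = 1 then if L = 2 then (2 : R) else 1 else 0 := by
  have : Fact (1 < L) := ⟨hL⟩
  have eq_neg_iff (i j : Fin d) :
      (Pi.single i 1 : Torus d L) = -Pi.single j 1 ↔ i = j ∧ L = 2 := by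
    rw [← Pi.single_neg, single_one_eq_single_iff, neg_one_eq_one_iff_eq_two hL]
  by_cases h_dist : torusDist a b = 1
  · rw [if_pos h_dist]
    obtain ⟨i, rfl | rfl⟩ := (torusDist_eq_one_iff hL a b).mp h_dist
    all_goals
      simp only [sub_eq_add_neg, add_right_inj, neg_eq_iff_eq_neg, neg_neg, eq_neg_iff,
        single_one_eq_single_iff, and_true]
      split_ifs <;> simp [*, one_add_one_eq_two, Finset.sum_add_distrib]
  · rw [if_neg h_dist]
    rw [torusDist_eq_one_iff hL] at h_dist
    push Not at h_dist
    simp [h_dist]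

/-- The weight of each of the `2d` steps `±e_i` in `SBmat d L lam`, relative to that of staying put.
When `L = 2` the steps `e_i` and `-e_i` are the same, and each takes half of the coupling. -/
noncomputable def stepWeight (L : ℕ) (lam : ℝ) : ℝ := if L = 2 then lam ^ 2 / 2 else lam ^ 2

lemma stepWeight_le_sq (L : ℕ) (lam : ℝ) : stepWeight L lam ≤ lam ^ 2 := by
  unfold stepWeight
  split_ifs
  · exact half_le_self (sq_nonneg lam)
  · exact le_rfl

lemma sq_div_two_le_stepWeight (L : ℕ) (lam : ℝ) : lam ^ 2 / 2 ≤ stepWeight L lam := by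
  unfold stepWeight
  split_ifs
  · exact le_rfl
  · exact half_le_self (sq_nonneg lam)

lemma stepWeight_nonneg (L : ℕ) (lam : ℝ) : 0 ≤ stepWeight L lam :=
  (by positivity : 0 ≤ lam ^ 2 / 2).trans (sq_div_two_le_stepWeight L lam)

lemma SBmat_eq_smul_walkMatrix [NeZero L] (hL : 2 ≤ L) (lam : ℝ) :
    SBmat d L lam =
      (((1 + 2 * d * stepWeight L lam) / (1 + 2 * d * lam ^ 2) : ℝ) : ℂ) •
        walkMatrix d L ((1 / (1 + 2 * d * stepWeight L lam) : ℝ) : ℂ)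
          ((stepWeight L lam / (1 + 2 * d * stepWeight L lam) : ℝ) : ℂ) := by
  have := stepWeight_nonneg L lam
  rw [smul_walkMatrix, ← Complex.ofReal_mul, ← Complex.ofReal_mul]
  rw [div_mul_div_cancel₀' (by positivity), div_mul_div_cancel₀' (by positivity)]
  ext a b
  simp only [SBmat, walkMatrix, Matrix.of_apply, sum_ite_eq_add_ite_eq_sub hL]
  rcases eq_or_ne a b with rfl | hab
  · simp [torusDist]
  · simp only [if_neg hab, if_neg hab.symm, zero_add, stepWeight]
    split_ifs <;> push_cast <;> ring

lemma exists_isElliptic (d : ℕ) {m M : ℝ} (hm : 0 < m) (hM : 0 ≤ M) :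
    ∃ c, 0 < c ∧ ∀ g, m ≤ g → g ≤ M →
      IsElliptic d c (1 / (1 + 2 * d * g)) (g / (1 + 2 * d * g)) := by
  have c_pos : 0 < min (1 / (d + 1 : ℝ)) m / (1 + 2 * d * M) := by positivity
  refine ⟨_, c_pos, fun g hmg hgM ↦ ?_⟩
  have g_pos := hm.trans_le hmg
  refine ⟨c_pos, ?_, ?_, by field_simp⟩
  · rw [← mul_div_assoc]
    gcongr
    calc (d : ℝ) * min (1 / (d + 1 : ℝ)) m ≤ d * (1 / (d + 1)) := by
          gcongr
          exact min_le_left _ _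
      _ ≤ 1 := by
          rw [mul_one_div, div_le_one (by positivity)]
          linarith
  · gcongr
    exact (min_le_right _ _).trans hmg

end VarianceMatrix

theorem propagator_no_zero_mode_general {d : ℕ} (hd : 3 ≤ d) {C₀ : ℝ} (hC₀ : 0 < C₀) :
    ∃ C : ℝ, 0 < C ∧ ∀ (L : ℕ) [NeZero L], 2 ≤ L → ∀ lam : ℝ, C₀⁻¹ ≤ |lam| → |lam| ≤ C₀ →
      ∀ ξ : ℂ, ‖ξ‖ < 1 → ∀ a b : Torus d L,
        ‖ThetaB d L lam ξ a b -
            ((L : ℂ) ^ (2 * d))⁻¹ * ∑ a', ∑ b', ThetaB d L lam ξ a' b'‖ ≤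
          C / ((torusDist a b : ℝ) + 1) ^ (d - 2) := by
  obtain ⟨c, hc, elliptic⟩ := exists_isElliptic d (m := C₀⁻¹ ^ 2 / 2) (by positivity) (sq_nonneg C₀)
  obtain ⟨C, hC, bound⟩ := exists_norm_inv_one_sub_smul_walkMatrix_sub_average_le hd hc
  refine ⟨C, hC, fun L _ hL lam h_ge h_le ξ hξ a b ↦ ?_⟩
  have lam_sq_ge : C₀⁻¹ ^ 2 ≤ lam ^ 2 := by
    rw [← sq_abs lam]
    gcongr
  have lam_sq_le : lam ^ 2 ≤ C₀ ^ 2 := by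
    rw [← sq_abs lam]
    gcongr
  have weight_ge := sq_div_two_le_stepWeight L lam
  have weight_le := stepWeight_le_sq L lam
  set ρ : ℝ := (1 + 2 * d * stepWeight L lam) / (1 + 2 * d * lam ^ 2) with hρ
  have ρ_nonneg : 0 ≤ ρ := by
    have := stepWeight_nonneg L lam
    positivity
  have ρ_le_one : ρ ≤ 1 := by
    rw [hρ, div_le_one (by positivity)]
    gcongr
  have norm_lt : ‖ξ * ρ‖ < 1 := by
    rw [norm_mul, Complex.norm_of_nonneg ρ_nonneg]
    exact (mul_le_of_le_one_right (norm_nonneg ξ) ρ_le_one).trans_lt hξ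
  simp_rw [ThetaB, SBmat_eq_smul_walkMatrix hL, smul_smul]
  exact bound L _ _ (elliptic _ (by linarith) (by linarith)) _ norm_lt a b

/-- **Propagator without zero mode (Lemma 2.19, part 8).**
With `Θ̊^(B)_t(a,b) := Θ^(B)_t(a,b) − L^{−2d} Σ_{a',b'} Θ^(B)_t(a',b')`, for any `τ > 0`
there is `C > 0`, depending only on `d, C₀, τ`, such that for every `L ≥ 2`, `t ∈ [0,1)`
and `a ∈ ℤ_L^d`: `|Θ̊^(B)_t(0,a)| ≤ C·L^τ·(|a|+1)^{−(d−2)}`. -/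
theorem propagator_no_zero_mode (d : ℕ) (hd : 3 ≤ d) (C₀ : ℝ) (hC₀ : 1 ≤ C₀)
    (τ : ℝ) (hτ : 0 < τ) :
    ∃ C : ℝ, 0 < C ∧
      ∀ (L : ℕ) [NeZero L], 2 ≤ L →
        ∀ lam : ℝ, C₀⁻¹ ≤ lam → lam ≤ C₀ →
          ∀ t : ℝ, 0 ≤ t → t < 1 →
            ∀ a : Fin d → ZMod L,
              norm (ThetaB d L lam (t : ℂ) 0 a -
                  ((L : ℂ) ^ (2 * d))⁻¹ *
                    ∑ a' : Fin d → ZMod L, ∑ b' : Fin d → ZMod L,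
                      ThetaB d L lam (t : ℂ) a' b') ≤
                C * (L : ℝ) ^ τ * (((torusDist 0 a : ℝ) + 1) ^ (d - 2))⁻¹ := by
  obtain ⟨C, hC, bound⟩ := propagator_no_zero_mode_general hd (zero_lt_one.trans_le hC₀)
  refine ⟨C, hC, fun L _ hL lam h_ge h_le t ht₀ ht₁ a ↦ ?_⟩
  have lam_nonneg : 0 ≤ lam := (inv_nonneg.mpr (zero_le_one.trans hC₀)).trans h_ge
  have norm_t_lt : ‖(t : ℂ)‖ < 1 := by rwa [Complex.norm_of_nonneg ht₀]
  have one_le_rpow : 1 ≤ (L : ℝ) ^ τ :=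
    Real.one_le_rpow (by exact_mod_cast one_le_two.trans hL) hτ.le
  refine (bound L hL lam ?_ ?_ t norm_t_lt 0 a).trans ?_
  · rwa [abs_of_nonneg lam_nonneg]
  · rwa [abs_of_nonneg lam_nonneg]
  · rw [div_eq_mul_inv]
    gcongr
    exact le_mul_of_one_le_right hC.le one_le_rpow
end
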